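/- arXiv:1810.00684 — 9 statements merged into one kernel-verified Lean document; each statement's English description precedes it below -/
import Mathlib

section
/- Let X and Y be real Banach spaces with dim X ≥ 2 and dim Y ≥ 2. Then the pair (X, Y) fails property (P2); that is, there exists ε > 0 such that for every η > 0 there are a bounded linear operator T : X → Y with ‖T‖ = 1 and a point x₀ ∈ S_X with ‖T(x₀)‖ > 1 − η, such that no x₁ ∈ S_X satisfies both ‖T(x₁)‖ = 1 and ‖x₁ − x₀‖ < ε. -/
theorem P2_key {Z W : Type*} [NormedAddCommGroup Z] [NormedSpace ℝ Z] [FiniteDimensional ℝ Z]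
    [NormedAddCommGroup W] [NormedSpace ℝ W]
    (hZ : Module.finrank ℝ Z = 2) (G : W →ₗ[ℝ] Z) (S : Z →L[ℝ] W) (hS : ‖S‖ ≤ 1)
    (hdet : LinearMap.det (G ∘ₗ (S : Z →ₗ[ℝ] W)) ≠ 0)
    (hmax : ∀ S' : Z →L[ℝ] W, ‖S'‖ ≤ 1 →
      |LinearMap.det (G ∘ₗ (S' : Z →ₗ[ℝ] W))| ≤ |LinearMap.det (G ∘ₗ (S : Z →ₗ[ℝ] W))|)
    (β : Z →L[ℝ] ℝ) (hβ : β ≠ 0) : ∃ z, ‖z‖ ≤ 1 ∧ ‖S z‖ = 1 ∧ β z ≠ 0 := by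
  by_contra! hcon
  obtain ⟨v, hv⟩ : ∃ v, β v = 1 := by
    obtain ⟨w, hw⟩ : ∃ w, β w ≠ 0 := by
      by_contra! h
      exact hβ (ContinuousLinearMap.ext h)
    exact ⟨(β w)⁻¹ • w, by simp [hw]⟩
  have hSle : ∀ z, ‖z‖ ≤ 1 → ‖S z‖ ≤ 1 := fun z hz => by
    have := S.le_opNorm z
    nlinarith [norm_nonneg z, norm_nonneg S]
  set M := ‖S v‖ with hM
  have hM0 : 0 ≤ M := norm_nonneg _
  have : ProperSpace Z := FiniteDimensional.proper ℝ Z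
  obtain ⟨c, hc1, hc⟩ : ∃ c < 1, ∀ z, ‖z‖ ≤ 1 → 1 < 4 * |β z| * M → ‖S z‖ ≤ c := by
    have hK : IsCompact (Metric.closedBall (0 : Z) 1 ∩ {z | 1 ≤ 4 * |β z| * M}) := by
      apply (isCompact_closedBall (0 : Z) 1).inter_right
      exact isClosed_le continuous_const (by fun_prop)
    rcases Set.eq_empty_or_nonempty (Metric.closedBall (0 : Z) 1 ∩ {z | 1 ≤ 4 * |β z| * M}) with h | h
    · refine ⟨0, by norm_num, fun z hz h1 => ?_⟩
      have : z ∈ (Metric.closedBall (0 : Z) 1 ∩ {z | 1 ≤ 4 * |β z| * M}) := ⟨by simpa using hz, h1.le⟩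
      rw [h] at this
      exact this.elim
    · obtain ⟨w, hw, hwm⟩ := hK.exists_isMaxOn h (f := fun z => ‖S z‖) (by fun_prop)
      refine ⟨‖S w‖, ?_, fun z hz h1 => hwm ⟨by simpa using hz, h1.le⟩⟩
      have hw1 : ‖w‖ ≤ 1 := by simpa using hw.1
      refine lt_of_le_of_ne (hSle w hw1) fun h2 => ?_
      have h3 : 1 ≤ 4 * |β w| * M := hw.2
      rw [hcon w hw1 h2] at h3
      norm_num at h3
  obtain ⟨δ, hδ0, hδ1, hδ2⟩ : ∃ δ : ℝ, 0 < δ ∧ δ < 1/8 ∧ c + 4 * δ * ‖β‖ * M ≤ 1 := by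
    have hp : 0 < 4 * ‖β‖ * M + 1 := by positivity
    refine ⟨min (1/16) ((1 - c) / (4 * ‖β‖ * M + 1)), ?_, ?_, ?_⟩
    · have : 0 < 1 - c := by linarith
      positivity
    · exact (min_le_left _ _).trans_lt (by norm_num)
    · have h1 := min_le_right (1/16) ((1 - c) / (4 * ‖β‖ * M + 1))
      rw [le_div_iff₀ hp] at h1
      have : 0 ≤ min (1/16) ((1 - c) / (4 * ‖β‖ * M + 1)) := by
        have : 0 < 1 - c := by linarith
        positivity
      linarith
  let B : Z →ₗ[ℝ] Z := (1 - δ) • LinearMap.transvection (β : Z →ₗ[ℝ] ℝ) ((4 * δ) • v)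
  have hB : ∀ z, B z = (1 - δ) • (z + β z • (4 * δ) • v) := fun z => by
    simp [B, LinearMap.transvection.apply]
  have hBdet : LinearMap.det B = (1 - δ)^2 * (1 + 4 * δ) := by
    simp only [B, LinearMap.det_smul, hZ, LinearMap.transvection.det]
    simp [hv]
  have hn : ‖S ∘L (LinearMap.toContinuousLinearMap B)‖ ≤ 1 := by
    refine ContinuousLinearMap.opNorm_le_of_unit_norm zero_le_one fun z hz => ?_
    have e : (S ∘L (LinearMap.toContinuousLinearMap B)) z
        = (1 - δ) • (S z + (β z * (4 * δ)) • S v) := by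
      simp [hB, smul_smul]
    rw [e, norm_smul, Real.norm_of_nonneg (by linarith)]
    have h1 : ‖S z + (β z * (4 * δ)) • S v‖ ≤ ‖S z‖ + |β z| * (4 * δ) * M := by
      refine (norm_add_le _ _).trans ?_
      rw [norm_smul, norm_mul, Real.norm_eq_abs, Real.norm_of_nonneg (by linarith : 0 ≤ 4 * δ)]
    have h2 : |β z| ≤ ‖β‖ := by
      have := β.le_opNorm z
      rwa [hz, mul_one] at this
    have hS1 := hSle z hz.le
    by_cases hb : 1 < 4 * |β z| * M
    · have h3 := hc z hz.le hb
      have h4 : |β z| * (4 * δ) * M ≤ ‖β‖ * (4 * δ) * M := by gcongr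
      have h5 : ‖S z + (β z * (4 * δ)) • S v‖ ≤ 1 := by linarith
      nlinarith [norm_nonneg (S z + (β z * (4 * δ)) • S v)]
    · have h5 : ‖S z + (β z * (4 * δ)) • S v‖ ≤ 1 + δ := by nlinarith
      nlinarith [norm_nonneg (S z + (β z * (4 * δ)) • S v)]
  have h := hmax _ hn
  have e : G ∘ₗ ((S ∘L (LinearMap.toContinuousLinearMap B) : Z →L[ℝ] W) : Z →ₗ[ℝ] W)
      = (G ∘ₗ (S : Z →ₗ[ℝ] W)) ∘ₗ B := by
    ext z; simp
  rw [e, LinearMap.det_comp, abs_mul, hBdet] at h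
  have hpos := abs_pos.2 hdet
  have h1 : 1 < (1 - δ)^2 * (1 + 4 * δ) := by nlinarith [pow_pos hδ0 3, mul_pos hδ0 (by linarith : 0 < 1/8 - δ)]
  have h2 := le_abs_self ((1 - δ)^2 * (1 + 4 * δ))
  nlinarith

theorem P2_exists {Z W : Type*} [NormedAddCommGroup Z] [NormedSpace ℝ Z] [FiniteDimensional ℝ Z]
    [NormedAddCommGroup W] [NormedSpace ℝ W] [FiniteDimensional ℝ W]
    (hZ : Module.finrank ℝ Z = 2) (hW : Module.finrank ℝ W = 2) :
    ∃ (S : Z →L[ℝ] W) (u v : Z) (a : Z →L[ℝ] ℝ), ‖S‖ ≤ 1 ∧ ‖u‖ ≤ 1 ∧ ‖v‖ ≤ 1 ∧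
      ‖S u‖ = 1 ∧ ‖S v‖ = 1 ∧ a u = 0 ∧ a v = 1 := by
  let J : Z ≃ₗ[ℝ] W := LinearEquiv.ofFinrankEq Z W (hZ.trans hW.symm)
  let G : W →ₗ[ℝ] Z := J.symm
  have : ProperSpace (Z →L[ℝ] W) := FiniteDimensional.proper ℝ _
  have hcont : Continuous fun S : Z →L[ℝ] W => |LinearMap.det (G ∘ₗ (S : Z →ₗ[ℝ] W))| := by
    have h1 : Continuous fun S : Z →L[ℝ] W =>
        ((LinearMap.toContinuousLinearMap G) ∘L S).det := by
      exact ContinuousLinearMap.continuous_det.comp (by fun_prop)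
    exact h1.abs
  obtain ⟨S, hS, hm⟩ := (isCompact_closedBall (0 : Z →L[ℝ] W) 1).exists_isMaxOn
    ⟨0, by simp⟩ hcont.continuousOn
  have hS1 : ‖S‖ ≤ 1 := by simpa using hS
  have hmax : ∀ S' : Z →L[ℝ] W, ‖S'‖ ≤ 1 →
      |LinearMap.det (G ∘ₗ (S' : Z →ₗ[ℝ] W))| ≤ |LinearMap.det (G ∘ₗ (S : Z →ₗ[ℝ] W))| :=
    fun S' h => hm (by simpa using h)
  have hdet : LinearMap.det (G ∘ₗ (S : Z →ₗ[ℝ] W)) ≠ 0 := by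
    intro h0
    let Jc : Z →L[ℝ] W := LinearMap.toContinuousLinearMap (J : Z →ₗ[ℝ] W)
    have hp : 0 < ‖Jc‖ + 1 := by positivity
    have h1 := hmax ((‖Jc‖ + 1)⁻¹ • Jc) (by
      rw [norm_smul, norm_inv, Real.norm_of_nonneg hp.le, inv_mul_le_iff₀ hp]; linarith)
    have e : G ∘ₗ (((‖Jc‖ + 1)⁻¹ • Jc : Z →L[ℝ] W) : Z →ₗ[ℝ] W)
        = (‖Jc‖ + 1)⁻¹ • LinearMap.id := by
      ext z; simp [G, Jc]
    rw [e, h0, LinearMap.det_smul, LinearMap.det_id] at h1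
    simp only [abs_zero, mul_one] at h1
    have := abs_pos.2 (pow_pos (inv_pos.2 hp) (Module.finrank ℝ Z)).ne'
    linarith
  have key := P2_key hZ G S hS1 hdet hmax
  have hfun : ∀ w : Z, ∃ β : Z →L[ℝ] ℝ, β ≠ 0 ∧ β w = 0 := by
    intro w
    obtain ⟨f, hf, hk⟩ := Submodule.exists_le_ker_of_lt_top (Submodule.span ℝ {w}) (by
      rw [lt_top_iff_ne_top]
      intro h
      have h1 := finrank_span_le_card (R := ℝ) ({w} : Set Z)
      rw [h, finrank_top, hZ] at h1
      simp at h1)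
    refine ⟨LinearMap.toContinuousLinearMap f, ?_, ?_⟩
    · intro h
      apply hf
      ext z
      exact DFunLike.congr_fun h z
    · exact hk (Submodule.mem_span_singleton_self w)
  obtain ⟨β₀, hβ₀, -⟩ := hfun 0
  obtain ⟨u, hu, hSu, -⟩ := key β₀ hβ₀
  obtain ⟨β, hβ, hβu⟩ := hfun u
  obtain ⟨v, hv, hSv, hβv⟩ := key β hβ
  exact ⟨S, u, v, (β v)⁻¹ • β, hS1, hu, hv, hSu, hSv, by simp [hβu], by simp [hβv]⟩

theorem P2_main {X Y Z : Type*} [NormedAddCommGroup X] [NormedSpace ℝ X]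
    [NormedAddCommGroup Y] [NormedSpace ℝ Y] [NormedAddCommGroup Z] [NormedSpace ℝ Z]
    (q : X →L[ℝ] Z) (hq : ∀ x, ‖q x‖ ≤ ‖x‖)
    (hl : ∀ z, ‖z‖ ≤ 1 → ∀ γ > (0 : ℝ), ∃ x, q x = z ∧ ‖x‖ < 1 + γ)
    (S : Z →L[ℝ] Y) (u v : Z) (a : Z →L[ℝ] ℝ) (hS : ‖S‖ ≤ 1) (hu : ‖u‖ ≤ 1) (hv : ‖v‖ ≤ 1)
    (hSu : ‖S u‖ = 1) (hSv : ‖S v‖ = 1) (hau : a u = 0) (hav : a v = 1) :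
    ∃ ε > (0 : ℝ), ∀ η > (0 : ℝ), ∃ (T : X →L[ℝ] Y) (x₀ : X),
      ‖T‖ = 1 ∧ ‖x₀‖ = 1 ∧ ‖T x₀‖ > 1 - η ∧
      ∀ x₁ : X, ‖x₁‖ = 1 → ‖T x₁‖ = 1 → ¬(‖x₁ - x₀‖ < ε) := by
  set c := ‖a ∘L q‖ with hcdef
  have hac : ∀ x, |a (q x)| ≤ c * ‖x‖ := fun x => (a ∘L q).le_opNorm x
  have hc : 0 < c := by
    obtain ⟨x, hx, -⟩ := hl v hv 1 one_pos
    have := hac x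
    rw [hx, hav, abs_one] at this
    by_contra! h
    nlinarith [norm_nonneg x]
  refine ⟨1 / c, by positivity, fun η hη => ?_⟩
  obtain ⟨δ, hδ0, hδ1, hδ⟩ : ∃ δ : ℝ, 0 < δ ∧ δ < 1 ∧
      1 - η < (1 - δ) / ((1 + δ) * (1 - δ + 2 * δ * c)) := by
    have ht : Filter.Tendsto (fun δ : ℝ => (1 - δ) / ((1 + δ) * (1 - δ + 2 * δ * c)))
        (nhdsWithin 0 (Set.Ioi 0)) (nhds 1) := by
      have : ContinuousAt (fun δ : ℝ => (1 - δ) / ((1 + δ) * (1 - δ + 2 * δ * c))) 0 := by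
        apply ContinuousAt.div (by fun_prop) (by fun_prop) (by norm_num)
      have h2 := this.tendsto
      norm_num at h2
      exact h2.mono_left nhdsWithin_le_nhds
    have h1 := ht.eventually (lt_mem_nhds (by linarith : 1 - η < 1))
    have h2 : ∀ᶠ δ : ℝ in nhdsWithin 0 (Set.Ioi 0), δ ∈ Set.Ioo (0 : ℝ) 1 :=
      Ioo_mem_nhdsGT one_pos
    obtain ⟨δ, h3, h4⟩ := (h1.and h2).exists
    exact ⟨δ, h4.1, h4.2, h3⟩
  let R : X →L[ℝ] Y := (1 - δ) • (S ∘L q) + (2 * δ) • (a ∘L q).smulRight (S v)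
  have hR : ∀ x, R x = (1 - δ) • S (q x) + (2 * δ) • a (q x) • S v := fun x => by simp [R]
  have hSq : ∀ x, ‖S (q x)‖ ≤ ‖x‖ := fun x => by
    have h1 := S.le_opNorm (q x)
    have h2 := hq x
    nlinarith [norm_nonneg (q x)]
  have hRle : ∀ x, ‖R x‖ ≤ (1 - δ) * ‖x‖ + 2 * δ * |a (q x)| := fun x => by
    rw [hR]
    refine (norm_add_le _ _).trans ?_
    rw [norm_smul, norm_smul, norm_smul, hSv, Real.norm_of_nonneg (by linarith),
      Real.norm_of_nonneg (by linarith), Real.norm_eq_abs, mul_one]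
    have := mul_le_mul_of_nonneg_left (hSq x) (by linarith : 0 ≤ 1 - δ)
    linarith
  have hNle : ‖R‖ ≤ 1 - δ + 2 * δ * c := by
    refine R.opNorm_le_bound (by nlinarith [mul_pos hδ0 hc]) fun x => ?_
    have h1 := hRle x
    have h2 := mul_le_mul_of_nonneg_left (hac x) (by linarith : 0 ≤ 2 * δ)
    linarith
  have hNge : 1 + δ ≤ ‖R‖ := by
    refine le_of_forall_pos_le_add fun κ hκ => ?_
    have hR0 := norm_nonneg R
    obtain ⟨x, hx, hx1⟩ := hl v hv (κ / (‖R‖ + 1)) (by positivity)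
    have h1 : R x = (1 + δ) • S v := by
      rw [hR, hx, hav, one_smul, ← add_smul]; ring_nf
    have h2 := R.le_opNorm x
    rw [h1, norm_smul, hSv, Real.norm_of_nonneg (by linarith), mul_one] at h2
    have h3 : κ / (‖R‖ + 1) * (‖R‖ + 1) = κ := by field_simp
    have h4 : 0 < κ / (‖R‖ + 1) := by positivity
    nlinarith
  have hN0 : 0 < ‖R‖ := by linarith
  obtain ⟨x, hx, hx1⟩ := hl u hu δ hδ0
  have hx0 : 0 < ‖x‖ := by
    rw [norm_pos_iff]
    rintro rfl
    rw [map_zero] at hx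
    rw [← hx] at hSu
    simp at hSu
  have hRx : ‖R x‖ = 1 - δ := by
    rw [hR, hx, hau]
    simp [norm_smul, hSu]
    linarith
  refine ⟨‖R‖⁻¹ • R, ‖x‖⁻¹ • x, ?_, ?_, ?_, ?_⟩
  · rw [norm_smul, norm_inv, norm_norm, inv_mul_cancel₀ hN0.ne']
  · rw [norm_smul, norm_inv, norm_norm, inv_mul_cancel₀ hx0.ne']
  · have e : ‖(‖R‖⁻¹ • R) (‖x‖⁻¹ • x)‖ = (1 - δ) / (‖x‖ * ‖R‖) := by
      rw [ContinuousLinearMap.smul_apply, map_smul, norm_smul, norm_smul, norm_inv, norm_norm,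
        norm_inv, norm_norm, hRx]
      field_simp
    rw [e]
    refine hδ.trans_le ?_
    have : 0 ≤ 1 - δ := by linarith
    gcongr
  · intro x₁ hx₁ hT hlt
    rw [ContinuousLinearMap.smul_apply, norm_smul, norm_inv, norm_norm] at hT
    have h1 : ‖R x₁‖ = ‖R‖ := by
      field_simp at hT
      exact hT
    have h2 := hRle x₁
    rw [h1, hx₁] at h2
    have h3 : 1 ≤ |a (q x₁)| := by nlinarith
    have h4 := hac (x₁ - ‖x‖⁻¹ • x)
    have h5 : a (q (x₁ - ‖x‖⁻¹ • x)) = a (q x₁) := by simp [hx, hau]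
    rw [h5] at h4
    rw [lt_div_iff₀ hc] at hlt
    linarith

theorem P2_sub {X : Type*} [NormedAddCommGroup X] [NormedSpace ℝ X]
    (hX : 2 ≤ Module.rank ℝ X) : ∃ E : Submodule ℝ X, FiniteDimensional ℝ E ∧
      Module.finrank ℝ E = 2 := by
  obtain ⟨w, hw⟩ := (Module.le_rank_iff (n := 2)).1 (by exact_mod_cast hX)
  refine ⟨Submodule.span ℝ (Set.range w), ?_, ?_⟩
  · exact FiniteDimensional.span_of_finite ℝ (Set.finite_range w)
  · simpa using finrank_span_eq_card hw

/-- If `X` and `Y` are real Banach spaces of dimension at least 2, then the pair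
`(X, Y)` fails property (P2): there is `ε > 0` such that for every `η > 0` one can
find a norm-one operator `T : X → Y` and `x₀ ∈ S_X` with `‖T x₀‖ > 1 - η`, but no
`x₁ ∈ S_X` satisfies both `‖T x₁‖ = 1` and `‖x₁ - x₀‖ < ε`. -/
theorem fails_propertyP2
    {X Y : Type*} [NormedAddCommGroup X] [NormedSpace ℝ X] [CompleteSpace X]
    [NormedAddCommGroup Y] [NormedSpace ℝ Y] [CompleteSpace Y]
    (hX : 2 ≤ Module.rank ℝ X) (hY : 2 ≤ Module.rank ℝ Y) :
    ∃ ε > (0 : ℝ), ∀ η > (0 : ℝ), ∃ (T : X →L[ℝ] Y) (x₀ : X),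
      ‖T‖ = 1 ∧ ‖x₀‖ = 1 ∧ ‖T x₀‖ > 1 - η ∧
      ∀ x₁ : X, ‖x₁‖ = 1 → ‖T x₁‖ = 1 → ¬(‖x₁ - x₀‖ < ε) := by
  obtain ⟨E, hE, hE2⟩ := P2_sub hX
  obtain ⟨W, hW, hW2⟩ := P2_sub hY
  obtain ⟨p, hp⟩ := Submodule.ClosedComplemented.of_finiteDimensional E
  have hsurj : LinearMap.range (p : X →ₗ[ℝ] E) = ⊤ :=
    LinearMap.range_eq_top.2 fun y => ⟨y, hp y⟩
  let M : Submodule ℝ X := LinearMap.ker (p : X →ₗ[ℝ] E)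
  have : IsClosed (M : Set X) := p.isClosed_ker
  let e : (X ⧸ M) ≃ₗ[ℝ] E :=
    LinearMap.quotKerEquivOfSurjective (p : X →ₗ[ℝ] E) (LinearMap.range_eq_top.1 hsurj)
  have : FiniteDimensional ℝ (X ⧸ M) := e.symm.finiteDimensional
  have hZ : Module.finrank ℝ (X ⧸ M) = 2 := e.finrank_eq.trans hE2
  obtain ⟨S, u, v, a, hS, hu, hv, hSu, hSv, hau, hav⟩ := P2_exists hZ hW2
  let q : X →L[ℝ] (X ⧸ M) := M.mkQ.mkContinuous 1 fun x => by
    simpa using Submodule.Quotient.norm_mk_le M x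
  refine P2_main q (fun x => Submodule.Quotient.norm_mk_le M x) ?_ (W.subtypeL ∘L S) u v a
    ?_ hu hv ?_ ?_ hau hav
  · intro z hz γ hγ
    obtain ⟨x, hx, hlt⟩ := Submodule.Quotient.norm_mk_lt z hγ
    exact ⟨x, hx, by linarith⟩
  · refine ContinuousLinearMap.opNorm_le_bound _ zero_le_one fun z => ?_
    exact S.le_of_opNorm_le hS z
  · exact hSu
  · exact hSv
end

section
/- Let X be a 2-dimensional real normed space identified with ℝ² via a basis e₁, e₂, and let γ̃(θ) = (cos θ · e₁ + sin θ · e₂)/‖cos θ · e₁ + sin θ · e₂‖ for θ ∈ ℝ. Let x* ∈ X* be a continuous linear functional and let θ₁ ≤ θ₂ with θ₂ − θ₁ ≤ π. If x*(γ̃(θ₁)) ≥ 1 and x*(γ̃(θ₂)) ≥ 1, then x*(γ̃(θ)) ≥ 1 for every θ ∈ [θ₁, θ₂]. In particular, if x* ∈ S_{X*} and γ̃(θ₁), γ̃(θ₂) belong to the face F(x*), then γ̃(θ) ∈ F(x*) for all θ ∈ [θ₁, θ₂]. -/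
/-- Let `X` be a 2-dimensional real normed space with basis `e₁, e₂`, and let
`γ θ = (cos θ • e₁ + sin θ • e₂) / ‖cos θ • e₁ + sin θ • e₂‖` parametrize `S_X`.
If a continuous linear functional `x'` satisfies `x'(γ θ₁) ≥ 1` and `x'(γ θ₂) ≥ 1`
with `θ₁ ≤ θ₂ ≤ θ₁ + π`, then `x'(γ θ) ≥ 1` for all `θ ∈ [θ₁, θ₂]`. In particular,
if `x' ∈ S_{X*}` and `γ θ₁, γ θ₂` lie in the face `F(x')`, then `γ θ ∈ F(x')` for
all `θ ∈ [θ₁, θ₂]`. -/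
theorem face_arc_lemma
    {X : Type*} [NormedAddCommGroup X] [NormedSpace ℝ X]
    (hX : Module.finrank ℝ X = 2)
    (e₁ e₂ : X) (hbasis : LinearIndependent ℝ ![e₁, e₂])
    (γ : ℝ → X)
    (hγ : ∀ θ : ℝ, γ θ =
      ‖Real.cos θ • e₁ + Real.sin θ • e₂‖⁻¹ • (Real.cos θ • e₁ + Real.sin θ • e₂))
    (x' : X →L[ℝ] ℝ) (θ₁ θ₂ : ℝ) (h12 : θ₁ ≤ θ₂) (hπ : θ₂ - θ₁ ≤ Real.pi)
    (h1 : 1 ≤ x' (γ θ₁)) (h2 : 1 ≤ x' (γ θ₂)) :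
    (∀ θ ∈ Set.Icc θ₁ θ₂, 1 ≤ x' (γ θ)) ∧
    (‖x'‖ = 1 → x' (γ θ₁) = 1 → x' (γ θ₂) = 1 →
      ∀ θ ∈ Set.Icc θ₁ θ₂, ‖γ θ‖ = 1 ∧ x' (γ θ) = 1) := by
  obtain ⟨v, hv⟩ : ∃ v : ℝ → X, ∀ θ, v θ = Real.cos θ • e₁ + Real.sin θ • e₂ := ⟨_, fun _ => rfl⟩
  have hγ' : ∀ θ, γ θ = ‖v θ‖⁻¹ • v θ := fun θ => by rw [hγ, hv]
  have hv0 : ∀ θ, 0 < ‖v θ‖ := by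
    intro θ
    rw [norm_pos_iff]
    intro h
    rw [hv] at h
    have h' := (LinearIndependent.pair_iff.1 hbasis) _ _ h
    have := Real.sin_sq_add_cos_sq θ
    rw [h'.1, h'.2] at this
    norm_num at this
  have key : ∀ θ, 1 ≤ x' (γ θ) ↔ ‖v θ‖ ≤ x' (v θ) := by
    intro θ
    rw [hγ', map_smul, smul_eq_mul, inv_mul_eq_div, le_div_iff₀ (hv0 θ), one_mul]
  have main : ∀ θ ∈ Set.Icc θ₁ θ₂, 1 ≤ x' (γ θ) := by
    rintro θ ⟨ha, hb⟩
    rcases h12.eq_or_lt with h | hlt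
    · have : θ = θ₁ := by linarith
      rw [this]; exact h1
    rw [key] at h1 h2 ⊢
    rcases hπ.eq_or_lt with h | hlt'
    · exfalso
      have h3 : θ₂ = θ₁ + Real.pi := by linarith
      have h4 : v θ₂ = - v θ₁ := by
        rw [hv, hv, h3, Real.cos_add_pi, Real.sin_add_pi, neg_smul, neg_smul, neg_add]
      rw [h4, norm_neg, map_neg] at h2
      linarith [hv0 θ₁]
    have hs : 0 < Real.sin (θ₂ - θ₁) := Real.sin_pos_of_pos_of_lt_pi (by linarith) hlt'
    have hA : 0 ≤ Real.sin (θ₂ - θ) := Real.sin_nonneg_of_nonneg_of_le_pi (by linarith) (by linarith)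
    have hB : 0 ≤ Real.sin (θ - θ₁) := Real.sin_nonneg_of_nonneg_of_le_pi (by linarith) (by linarith)
    have hid : Real.sin (θ₂ - θ₁) • v θ = Real.sin (θ₂ - θ) • v θ₁ + Real.sin (θ - θ₁) • v θ₂ := by
      simp only [hv, Real.sin_sub]
      module
    have hn : Real.sin (θ₂ - θ₁) * ‖v θ‖ ≤ Real.sin (θ₂ - θ) * ‖v θ₁‖ + Real.sin (θ - θ₁) * ‖v θ₂‖ := by
      have := norm_add_le (Real.sin (θ₂ - θ) • v θ₁) (Real.sin (θ - θ₁) • v θ₂)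
      rw [← hid] at this
      simpa only [norm_smul, Real.norm_of_nonneg hs.le, Real.norm_of_nonneg hA,
        Real.norm_of_nonneg hB] using this
    have hx := congrArg x' hid
    simp only [map_add, map_smul, smul_eq_mul] at hx
    refine le_of_mul_le_mul_left ?_ hs
    rw [hx]
    exact hn.trans (add_le_add (mul_le_mul_of_nonneg_left h1 hA) (mul_le_mul_of_nonneg_left h2 hB))
  refine ⟨main, fun hx _ _ θ hθ => ?_⟩
  have hg : ‖γ θ‖ = 1 := by
    rw [hγ', norm_smul, norm_inv, norm_norm, inv_mul_cancel₀ (hv0 θ).ne']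
  refine ⟨hg, le_antisymm ?_ (main θ hθ)⟩
  have := x'.le_opNorm (γ θ)
  rw [hx, hg, one_mul] at this
  exact (le_abs_self _).trans this
end

section
/- Let X and Y be 2-dimensional real normed spaces, identify X with ℝ² via a basis e₁, e₂, and set γ̃(θ) = (cos θ · e₁ + sin θ · e₂)/‖cos θ · e₁ + sin θ · e₂‖. Let T : X → Y be a bounded linear operator with ‖T‖ = 1, let x = γ̃(θ₀) ∈ S_X, and let γ(θ) = γ̃(θ + θ₀) for θ ∈ [0, π] be the half arc starting at x. Suppose there is θ_c ∈ (0, π) such that ‖T(γ(0))‖ = ‖T(γ(θ_c))‖ = ‖T(γ(π))‖ = 1, and suppose there exist θ₁ ∈ [0, θ_c] and θ₂ ∈ [θ_c, π] such that ‖T(γ(θ₁))‖ < 1 and ‖T(γ(θ₂))‖ < 1. Then for every y* ∈ S_{Y*} with y*(T(x)) = 1, the point T(γ(θ_c)) does not belong to F(y*) ∪ F(−y*). -/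
/-- Let `X, Y` be 2-dimensional real normed spaces, `γ` the half arc starting at
`x = γ̃ θ₀ ∈ S_X`, and `T : X → Y` a norm-one operator such that
`‖T (γ 0)‖ = ‖T (γ θc)‖ = ‖T (γ π)‖ = 1` for some `θc ∈ (0, π)`, while
`‖T (γ θ₁)‖ < 1` and `‖T (γ θ₂)‖ < 1` for some `θ₁ ∈ [0, θc]`, `θ₂ ∈ [θc, π]`.
Then `T (γ θc) ∉ F(y') ∪ F(-y')` for any `y' ∈ S_{Y*}` with `y'(T x) = 1`. -/
theorem image_not_in_faces
    {X Y : Type*} [NormedAddCommGroup X] [NormedSpace ℝ X]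
    [NormedAddCommGroup Y] [NormedSpace ℝ Y]
    (hX : Module.finrank ℝ X = 2) (hY : Module.finrank ℝ Y = 2)
    (e₁ e₂ : X) (hbasis : LinearIndependent ℝ ![e₁, e₂])
    (θ₀ : ℝ) (γ : ℝ → X)
    (hγ : ∀ θ : ℝ, γ θ =
      ‖Real.cos (θ + θ₀) • e₁ + Real.sin (θ + θ₀) • e₂‖⁻¹ •
        (Real.cos (θ + θ₀) • e₁ + Real.sin (θ + θ₀) • e₂))
    (T : X →L[ℝ] Y) (hT : ‖T‖ = 1)
    (θc : ℝ) (hθc : θc ∈ Set.Ioo 0 Real.pi)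
    (h0 : ‖T (γ 0)‖ = 1) (hc : ‖T (γ θc)‖ = 1) (hπ : ‖T (γ Real.pi)‖ = 1)
    (θ₁ : ℝ) (hθ₁ : θ₁ ∈ Set.Icc 0 θc) (h1 : ‖T (γ θ₁)‖ < 1)
    (θ₂ : ℝ) (hθ₂ : θ₂ ∈ Set.Icc θc Real.pi) (h2 : ‖T (γ θ₂)‖ < 1) :
    ∀ y' : Y →L[ℝ] ℝ, ‖y'‖ = 1 → y' (T (γ 0)) = 1 →
      T (γ θc) ∉
        ({y : Y | ‖y‖ = 1 ∧ y' y = 1} ∪ {y : Y | ‖y‖ = 1 ∧ y' y = -1}) := by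
  intro y' hy' hx hmem
  obtain ⟨v, hv⟩ : ∃ v : ℝ → X, ∀ θ, v θ =
      Real.cos (θ + θ₀) • e₁ + Real.sin (θ + θ₀) • e₂ := ⟨_, fun _ => rfl⟩
  have hvpos : ∀ θ, 0 < ‖v θ‖ := by
    intro θ
    rw [norm_pos_iff]
    intro h
    rw [hv] at h
    obtain ⟨ha, hb⟩ := LinearIndependent.pair_iff.1 hbasis _ _ h
    have := Real.sin_sq_add_cos_sq (θ + θ₀)
    rw [ha, hb] at this
    norm_num at this
  have hf : ∀ θ, y' (T (v θ)) = ‖v θ‖ * y' (T (γ θ)) := by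
    intro θ
    rw [hγ θ, ← hv θ, map_smul, map_smul, smul_eq_mul,
      mul_inv_cancel_left₀ (hvpos θ).ne']
  have hlt : ∀ θ, ‖T (γ θ)‖ < 1 → |y' (T (v θ))| < ‖v θ‖ := by
    intro θ h
    have h3 := y'.le_opNorm (T (γ θ))
    rw [hy', one_mul, Real.norm_eq_abs] at h3
    rw [hf, abs_mul, abs_of_pos (hvpos θ)]
    nlinarith [hvpos θ]
  have hcomb : ∀ θ, Real.sin θc • v θ = Real.sin (θc - θ) • v 0 + Real.sin θ • v θc := by
    intro θ
    have hs := Real.sin_sq_add_cos_sq θ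
    simp only [hv, smul_add, smul_smul, zero_add, Real.sin_sub, Real.cos_add, Real.sin_add]
    module
  have hsc : 0 < Real.sin θc := Real.sin_pos_of_mem_Ioo hθc
  have hfc : ∀ θ, Real.sin θc * y' (T (v θ)) =
      Real.sin (θc - θ) * ‖v 0‖ + Real.sin θ * (‖v θc‖ * y' (T (γ θc))) := by
    intro θ
    have h := congrArg (fun z => y' (T z)) (hcomb θ)
    simp only [map_add, map_smul, smul_eq_mul] at h
    rw [h, hf 0, hf θc, hx, mul_one]
  have hnc : ∀ θ, Real.sin θc * ‖v θ‖ ≤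
      |Real.sin (θc - θ)| * ‖v 0‖ + |Real.sin θ| * ‖v θc‖ := by
    intro θ
    have h := norm_add_le (Real.sin (θc - θ) • v 0) (Real.sin θ • v θc)
    rw [← hcomb] at h
    simpa only [norm_smul, Real.norm_eq_abs, abs_of_pos hsc] using h
  rcases hmem with ⟨_, h⟩ | ⟨_, h⟩
  · have hA : 0 ≤ Real.sin (θc - θ₁) :=
      Real.sin_nonneg_of_nonneg_of_le_pi (by linarith [hθ₁.2]) (by linarith [hθ₁.1, hθc.2])
    have hB : 0 ≤ Real.sin θ₁ :=
      Real.sin_nonneg_of_nonneg_of_le_pi hθ₁.1 (by linarith [hθ₁.2, hθc.2])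
    have a := hfc θ₁
    have b := hnc θ₁
    have c := (abs_lt.1 (hlt θ₁ h1)).2
    rw [abs_of_nonneg hA, abs_of_nonneg hB] at b
    rw [h] at a
    have d := mul_lt_mul_of_pos_left c hsc
    linarith
  · have hA : Real.sin (θc - θ₂) ≤ 0 :=
      Real.sin_nonpos_of_nonpos_of_neg_pi_le (by linarith [hθ₂.1])
        (by linarith [hθ₂.2, hθc.1])
    have hB : 0 ≤ Real.sin θ₂ :=
      Real.sin_nonneg_of_nonneg_of_le_pi (by linarith [hθ₂.1, hθc.1]) hθ₂.2
    have a := hfc θ₂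
    have b := hnc θ₂
    have c := (abs_lt.1 (hlt θ₂ h2)).1
    rw [abs_of_nonpos hA, abs_of_nonneg hB] at b
    rw [h] at a
    have d := mul_lt_mul_of_pos_left c hsc
    linarith
end

section
/- Let X and Y be 2-dimensional real normed spaces. Then there exists a bounded linear operator T : X → Y with ‖T‖ = 1 such that (i) T(B_X) ⊆ B_Y, and (ii) there are two points y₁, y₂ ∈ T(B_X) ∩ S_Y and a functional y₁* ∈ S_{Y*} with y₁*(y₁) = 1 such that dist(y₂, F(y₁*) ∪ F(−y₁*)) > 0. -/
/-- For any 2-dimensional real normed spaces `X` and `Y` there is a norm-one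
operator `T : X → Y` with `T(B_X) ⊆ B_Y` such that `T(B_X) ∩ S_Y` contains two
points `y₁, y₂` and there exists `y₁' ∈ S_{Y*}` with `y₁'(y₁) = 1` and
`dist(y₂, F(y₁') ∪ F(-y₁')) > 0`. -/
theorem exists_operator_two_contact_points
    {X Y : Type*} [NormedAddCommGroup X] [NormedSpace ℝ X]
    [NormedAddCommGroup Y] [NormedSpace ℝ Y]
    (hX : Module.finrank ℝ X = 2) (hY : Module.finrank ℝ Y = 2) :
    ∃ T : X →L[ℝ] Y, ‖T‖ = 1 ∧
      T '' Metric.closedBall 0 1 ⊆ Metric.closedBall 0 1 ∧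
      ∃ y₁ y₂ : Y,
        y₁ ∈ T '' Metric.closedBall 0 1 ∩ Metric.sphere 0 1 ∧
        y₂ ∈ T '' Metric.closedBall 0 1 ∩ Metric.sphere 0 1 ∧
        ∃ y₁' : Y →L[ℝ] ℝ, ‖y₁'‖ = 1 ∧ y₁' y₁ = 1 ∧
          0 < Metric.infDist y₂
            ({y : Y | ‖y‖ = 1 ∧ y₁' y = 1} ∪ {y : Y | ‖y‖ = 1 ∧ y₁' y = -1}) := by
  have fX : FiniteDimensional ℝ X := FiniteDimensional.of_finrank_pos (by omega)
  have fY : FiniteDimensional ℝ Y := FiniteDimensional.of_finrank_pos (by omega)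
  have pX : ProperSpace X := FiniteDimensional.proper ℝ X
  have pL : ProperSpace (X →L[ℝ] Y) := FiniteDimensional.proper ℝ _
  have pD : ProperSpace (Y →L[ℝ] ℝ) := FiniteDimensional.proper ℝ _
  let e : Y ≃L[ℝ] X := ContinuousLinearEquiv.ofFinrankEq (by omega)
  let V : (X →L[ℝ] Y) → ℝ := fun T => |((e : Y →L[ℝ] X).comp T).det|
  have hVc : Continuous V := by
    have h1 : Continuous fun T : X →L[ℝ] Y => (e : Y →L[ℝ] X).comp T := by fun_prop
    exact (ContinuousLinearMap.continuous_det.comp h1).abs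
  have hVs : ∀ (c : ℝ) (T : X →L[ℝ] Y), V (c • T) = c ^ 2 * V T := by
    intro c T
    simp only [V, ContinuousLinearMap.det]
    have : (((e : Y →L[ℝ] X).comp (c • T) : X →L[ℝ] X) : X →ₗ[ℝ] X)
        = c • (((e : Y →L[ℝ] X).comp T : X →L[ℝ] X) : X →ₗ[ℝ] X) := by
      ext x; simp
    rw [this, LinearMap.det_smul, hX, abs_mul, abs_of_nonneg (sq_nonneg c)]
  have hVm : ∀ (A : Y →L[ℝ] Y) (T : X →L[ℝ] Y), V (A.comp T) = |A.det| * V T := by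
    intro A T
    simp only [V, ContinuousLinearMap.det]
    rw [← abs_mul, ← LinearMap.det_conj (A : Y →ₗ[ℝ] Y) e.toLinearEquiv, ← LinearMap.det_comp]
    congr 2
    ext x; simp
  have hVe : V (e.symm : X →L[ℝ] Y) = 1 := by
    simp only [V, ContinuousLinearMap.det]
    have : (((e : Y →L[ℝ] X).comp (e.symm : X →L[ℝ] Y) : X →L[ℝ] X) : X →ₗ[ℝ] X)
        = LinearMap.id := by
      ext x; simp
    rw [this]; simp
  obtain ⟨T, hTm, hTmax⟩ := (isCompact_closedBall (0 : X →L[ℝ] Y) 1).exists_isMaxOn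
    ⟨0, by simp⟩ hVc.continuousOn
  have hT1 : ‖T‖ ≤ 1 := by simpa using hTm
  have hmax : ∀ S : X →L[ℝ] Y, ‖S‖ ≤ 1 → V S ≤ V T := by
    intro S hS
    exact hTmax (by simpa using hS)
  have hVT : 0 < V T := by
    have h1 : (0:ℝ) < ‖(e.symm : X →L[ℝ] Y)‖ + 1 := by positivity
    have h2 := hmax ((‖(e.symm : X →L[ℝ] Y)‖ + 1)⁻¹ • (e.symm : X →L[ℝ] Y)) (by
      rw [norm_smul, norm_inv, Real.norm_of_nonneg h1.le, inv_mul_le_iff₀ h1]; linarith)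
    rw [hVs, hVe] at h2
    have : 0 < ((‖(e.symm : X →L[ℝ] Y)‖ + 1)⁻¹) ^ 2 * 1 := by positivity
    linarith
  have hT0 : T ≠ 0 := by
    rintro rfl
    have := hVs 0 0
    simp at this
    linarith
  have hTn : 0 < ‖T‖ := norm_pos_iff.mpr hT0
  have hTe : ‖T‖ = 1 := by
    by_contra hne
    have hlt : ‖T‖ < 1 := lt_of_le_of_ne hT1 hne
    have h2 := hmax (‖T‖⁻¹ • T) (by
      rw [norm_smul, norm_inv, norm_norm, inv_mul_cancel₀ hTn.ne'])
    rw [hVs] at h2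
    have h3 : 1 < ‖T‖⁻¹ := (one_lt_inv₀ hTn).mpr hlt
    have h4 : 1 < ‖T‖⁻¹ ^ 2 := one_lt_pow₀ h3 two_ne_zero
    nlinarith
  have hTx : ∀ x, ‖x‖ ≤ 1 → ‖T x‖ ≤ 1 := by
    intro x hx
    calc ‖T x‖ ≤ ‖T‖ * ‖x‖ := T.le_opNorm x
      _ ≤ 1 := by rw [hTe]; linarith
  refine ⟨T, hTe, ?_, ?_⟩
  · rintro _ ⟨x, hx, rfl⟩
    simpa using hTx x (by simpa using hx)
  by_contra hcon
  have H : ∀ (x z : X) (f : Y →L[ℝ] ℝ), ‖x‖ ≤ 1 → ‖z‖ ≤ 1 → ‖T x‖ = 1 → ‖T z‖ = 1 → ‖f‖ = 1 →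
      f (T x) = 1 → f (T z) = 1 ∨ f (T z) = -1 := by
    intro x z f hx hz hTx1 hTz1 hf hfx
    by_contra hn
    apply hcon
    refine ⟨T x, T z, ⟨⟨x, by simpa using hx, rfl⟩, by simpa using hTx1⟩,
      ⟨⟨z, by simpa using hz, rfl⟩, by simpa using hTz1⟩, f, hf, hfx, ?_⟩
    have hcl : IsClosed ({y : Y | ‖y‖ = 1 ∧ f y = 1} ∪ {y : Y | ‖y‖ = 1 ∧ f y = -1}) := by
      apply IsClosed.union
      · exact (isClosed_eq continuous_norm continuous_const).inter
          (isClosed_eq f.continuous continuous_const)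
      · exact (isClosed_eq continuous_norm continuous_const).inter
          (isClosed_eq f.continuous continuous_const)
    refine (hcl.notMem_iff_infDist_pos ⟨T x, Or.inl ⟨hTx1, hfx⟩⟩).mp ?_
    rintro (h | h)
    · exact hn (Or.inl h.2)
    · exact hn (Or.inr h.2)
  have hle : ∀ (g : Y →L[ℝ] ℝ) (y : Y), ‖g‖ ≤ 1 → g y ≤ ‖y‖ := by
    intro g y hg
    calc g y ≤ ‖g y‖ := Real.le_norm_self _
      _ ≤ ‖g‖ * ‖y‖ := g.le_opNorm y
      _ ≤ ‖y‖ := mul_le_of_le_one_left (norm_nonneg _) hg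
  have hsup : ∀ (g : Y →L[ℝ] ℝ) (y : Y), ‖g‖ ≤ 1 → ‖y‖ ≤ 1 → 1 ≤ g y →
      ‖g‖ = 1 ∧ ‖y‖ = 1 ∧ g y = 1 := by
    intro g y hg hy h
    have h1 := hle g y hg
    have h2 : g y ≤ ‖g‖ * ‖y‖ := (Real.le_norm_self _).trans (g.le_opNorm y)
    have h3 : ‖g‖ * ‖y‖ ≤ ‖g‖ := mul_le_of_le_one_right (norm_nonneg _) hy
    refine ⟨by linarith, by linarith, by linarith⟩
  -- a contact point
  obtain ⟨x₁, hx₁m, hx₁max⟩ := (isCompact_closedBall (0 : X) 1).exists_isMaxOn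
    ⟨0, by simp⟩ (f := fun x => ‖T x‖) (by fun_prop)
  have hx₁ : ‖x₁‖ ≤ 1 := by simpa using hx₁m
  have hy₁ : ‖T x₁‖ = 1 := by
    apply le_antisymm (hTx x₁ hx₁)
    rw [← hTe]
    refine T.opNorm_le_of_unit_norm (norm_nonneg _) ?_
    intro x hx
    exact hx₁max (by simp [hx])
  obtain ⟨f, hf, hfy⟩ := exists_dual_vector ℝ (T x₁) (by
    intro h; rw [h] at hy₁; simp at hy₁)
  rw [hy₁] at hfy
  have hfy : f (T x₁) = 1 := by simpa using hfy
  -- sign coherence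
  have key1 : ∀ (x : X) (g : Y →L[ℝ] ℝ), ‖x‖ ≤ 1 → ‖T x‖ = 1 → ‖g‖ = 1 → g (T x) = 1 →
      f (T x) = 1 → g (T x₁) = 1 := by
    intro x g hx hTx1 hg hgx hfx
    rcases H x x₁ g hx hx₁ hTx1 hy₁ hg hgx with h | h
    · exact h
    exfalso
    have hm : ‖(1/2 : ℝ) • (x + x₁)‖ ≤ 1 := by
      rw [norm_smul]
      have := norm_add_le x x₁
      norm_num
      linarith
    have hfm : f (T ((1/2 : ℝ) • (x + x₁))) = 1 := by
      simp only [map_smul, map_add, hfx, hfy, smul_eq_mul]; norm_num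
    have hgm : g (T ((1/2 : ℝ) • (x + x₁))) = 0 := by
      simp only [map_smul, map_add, hgx, h, smul_eq_mul]; norm_num
    have h3 := hsup f _ hf.le (hTx _ hm) hfm.ge
    rcases H x _ g hx hm hTx1 h3.2.1 hg hgx with h4 | h4 <;> rw [hgm] at h4 <;> norm_num at h4
  have key : ∀ (x : X) (g : Y →L[ℝ] ℝ), ‖x‖ ≤ 1 → ‖T x‖ = 1 → ‖g‖ = 1 → g (T x) = 1 →
      f (T x) * g (T x₁) = 1 := by
    intro x g hx hTx1 hg hgx
    rcases H x₁ x f hx₁ hx hy₁ hTx1 hf hfy with h | h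
    · rw [h, key1 x g hx hTx1 hg hgx h, one_mul]
    · have := key1 (-x) (-g) (by simpa using hx) (by simpa using hTx1) (by simpa using hg)
        (by simpa using hgx) (by simp [h])
      have h5 : g (T x₁) = -1 := by
        simp at this; linarith
      rw [h, h5]; norm_num
  let D : Y →L[ℝ] Y := (2:ℝ) • ContinuousLinearMap.id ℝ Y - (3:ℝ) • f.smulRight (T x₁)
  have hD : ∀ y, D y = (2:ℝ) • y - (3:ℝ) • (f y • T x₁) := by intro y; simp [D]
  let K : Set (X × (Y →L[ℝ] ℝ)) :=
    (Metric.closedBall 0 1 ×ˢ Metric.closedBall 0 1) ∩ {p | 0 ≤ p.2 (D (T p.1))}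
  have hK : IsCompact K := by
    refine ((isCompact_closedBall _ _).prod (isCompact_closedBall _ _)).inter_right ?_
    exact isClosed_le continuous_const (by fun_prop)
  obtain ⟨⟨x₀, g₀⟩, hp, hpmax⟩ := hK.exists_isMaxOn (f := fun p => p.2 (T p.1))
    ⟨(0, 0), by simp [K]⟩ (by fun_prop)
  have hx₀ : ‖x₀‖ ≤ 1 := by simpa using hp.1.1
  have hg₀ : ‖g₀‖ ≤ 1 := by simpa using hp.1.2
  have hgD : 0 ≤ g₀ (D (T x₀)) := hp.2
  set M := g₀ (T x₀) with hM
  have hM1 : M < 1 := by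
    by_contra hge
    have h1 := hsup g₀ (T x₀) hg₀ (hTx _ hx₀) (not_lt.mp hge)
    have h2 := key x₀ g₀ hx₀ h1.2.1 h1.1 h1.2.2
    rw [hD] at hgD
    simp only [map_sub, map_smul, smul_eq_mul] at hgD
    rw [h2, h1.2.2] at hgD
    norm_num at hgD
  have hMx : ∀ (x : X) (g : Y →L[ℝ] ℝ), ‖x‖ ≤ 1 → ‖g‖ ≤ 1 → 0 ≤ g (D (T x)) → g (T x) ≤ M := by
    intro x g hx hg h
    exact hpmax (show (x, g) ∈ K from ⟨⟨by simpa using hx, by simpa using hg⟩, h⟩)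
  have hC : 0 < ‖D‖ + 1 := by positivity
  obtain ⟨t, ht0, ht4, htM⟩ : ∃ t : ℝ, 0 < t ∧ t ≤ 1/4 ∧ t * (‖D‖ + 1) ≤ 1 - M := by
    refine ⟨min (1/4) ((1 - M) / (‖D‖ + 1)), ?_, min_le_left _ _, ?_⟩
    · have : 0 < (1 - M) / (‖D‖ + 1) := div_pos (by linarith) hC
      exact lt_min (by norm_num) this
    · rw [← le_div_iff₀ hC]; exact min_le_right _ _
  let A : Y →L[ℝ] Y := ContinuousLinearMap.id ℝ Y + t • D
  have hA : ∀ y, A y = y + t • D y := by intro y; simp [A]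
  have hAT : ‖A.comp T‖ ≤ 1 := by
    refine ContinuousLinearMap.opNorm_le_of_unit_norm zero_le_one ?_
    intro x hx
    obtain ⟨g, hg, hgy⟩ := exists_dual_vector'' ℝ (A (T x))
    have hgy : g (A (T x)) = ‖A (T x)‖ := by simpa using hgy
    rw [ContinuousLinearMap.comp_apply, ← hgy, hA, map_add, map_smul, smul_eq_mul]
    by_cases h : 0 ≤ g (D (T x))
    · have h1 := hMx x g hx.le hg h
      have h2 : g (D (T x)) ≤ ‖D‖ + 1 := by
        have := hle g (D (T x)) hg
        have h3 := D.le_opNorm (T x)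
        have h4 : ‖D‖ * ‖T x‖ ≤ ‖D‖ := mul_le_of_le_one_right (norm_nonneg _) (hTx x hx.le)
        linarith
      have h3 := mul_le_mul_of_nonneg_left h2 ht0.le
      linarith
    · have h1 := (hle g (T x) hg).trans (hTx x hx.le)
      have h2 : t * g (D (T x)) ≤ 0 := mul_nonpos_of_nonneg_of_nonpos ht0.le (not_le.mp h).le
      linarith
  have hdet : A.det = (1 + 2 * t) * (1 - t) := by
    have h2t : 1 + 2 * t ≠ 0 := by positivity
    have : (A : Y →ₗ[ℝ] Y) = (1 + 2 * t) •
        LinearMap.transvection (f : Y →ₗ[ℝ] ℝ) ((-(3 * t / (1 + 2 * t))) • T x₁) := by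
      ext y
      simp only [ContinuousLinearMap.coe_coe, hA, hD, LinearMap.smul_apply,
        LinearMap.transvection.apply]
      match_scalars <;> field_simp
    rw [ContinuousLinearMap.det, this, LinearMap.det_smul, hY, LinearMap.transvection.det]
    simp only [ContinuousLinearMap.coe_coe, map_smul, hfy, smul_eq_mul]
    field_simp
    ring
  have h1 := hmax _ hAT
  rw [hVm, hdet] at h1
  have h2 : 1 < (1 + 2 * t) * (1 - t) := by nlinarith
  have h3 := lt_of_lt_of_le h2 (le_abs_self _)
  nlinarith
end

section
/- Let X and Y be 2-dimensional real normed spaces. Then there exist δ > 0, a sequence (T_n) of bounded linear operators from X to Y with ‖T_n‖ = 1 for every n ∈ ℕ, and a point x₀ ∈ S_X, such that ‖T_n(x₀)‖ → 1 as n → ∞, but dist(x₀, {x ∈ S_X : ‖T_n(x)‖ = 1}) > δ for every n ∈ ℕ. -/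
open Filter Topology

/-- Norm attainment in finite dimensions. -/
lemma aux_attain {X Y : Type*} [NormedAddCommGroup X] [NormedSpace ℝ X]
    [NormedAddCommGroup Y] [NormedSpace ℝ Y] [FiniteDimensional ℝ X] [Nontrivial X]
    (T : X →L[ℝ] Y) : ∃ x : X, ‖x‖ = 1 ∧ ‖T x‖ = ‖T‖ := by
  have : ProperSpace X := FiniteDimensional.proper ℝ X
  have hne : (Metric.sphere (0 : X) 1).Nonempty := NormedSpace.sphere_nonempty.2 zero_le_one
  obtain ⟨x, hx, hmax⟩ := (isCompact_sphere (0 : X) 1).exists_isMaxOn hne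
    (f := fun x => ‖T x‖) (by fun_prop)
  have hx1 : ‖x‖ = 1 := by simpa using hx
  refine ⟨x, hx1, le_antisymm ?_ ?_⟩
  · simpa [hx1] using T.le_opNorm x
  · refine T.opNorm_le_of_unit_norm (norm_nonneg _) ?_
    intro z hz
    exact hmax (by simpa using hz)

/-- An operator of maximal determinant in the unit ball. -/
lemma aux_max {X Y : Type*} [NormedAddCommGroup X] [NormedSpace ℝ X]
    [NormedAddCommGroup Y] [NormedSpace ℝ Y]
    (hX : Module.finrank ℝ X = 2) (hY : Module.finrank ℝ Y = 2) :
    ∃ T : X →L[ℝ] Y, ‖T‖ = 1 ∧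
      ∀ A : X →L[ℝ] X, 1 ≤ |LinearMap.det (A : X →ₗ[ℝ] X)| → 1 ≤ ‖T.comp A‖ := by
  have : FiniteDimensional ℝ X := Module.finite_of_finrank_pos (by omega)
  have : FiniteDimensional ℝ Y := Module.finite_of_finrank_pos (by omega)
  have : Nontrivial X := Module.nontrivial_of_finrank_pos (R := ℝ) (by omega)
  have : ProperSpace (X →L[ℝ] Y) := FiniteDimensional.proper ℝ _
  let e : Y ≃L[ℝ] X := ContinuousLinearEquiv.ofFinrankEq (hY.trans hX.symm)
  let D : (X →L[ℝ] Y) → ℝ := fun S => |((e : Y →L[ℝ] X).comp S).det|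
  have hD : Continuous D := by
    have h1 : Continuous fun S : X →L[ℝ] Y => (e : Y →L[ℝ] X).comp S := by fun_prop
    exact (ContinuousLinearMap.continuous_det.comp h1).abs
  have hsm : ∀ (c : ℝ) (S : X →L[ℝ] Y), D (c • S) = c ^ 2 * D S := by
    intro c S
    simp only [D]
    rw [ContinuousLinearMap.comp_smul, ContinuousLinearMap.det, ContinuousLinearMap.toLinearMap_smul,
      LinearMap.det_smul, hX, abs_mul, abs_of_nonneg (sq_nonneg c)]
  obtain ⟨T, hT, hmax⟩ := (isCompact_closedBall (0 : X →L[ℝ] Y) 1).exists_isMaxOn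
    ⟨0, by simp⟩ hD.continuousOn
  have hT1 : ‖T‖ ≤ 1 := by simpa using hT
  have hbd : ∀ S : X →L[ℝ] Y, D S ≤ ‖S‖ ^ 2 * D T := by
    intro S
    by_cases hS : S = 0
    · subst hS
      have := hsm 0 0
      simp at this
      simp [this]
    · have hS' : 0 < ‖S‖ := norm_pos_iff.2 hS
      have h := hmax (show ‖S‖⁻¹ • S ∈ Metric.closedBall (0 : X →L[ℝ] Y) 1 by
        simp [norm_smul, hS'.ne'])
      have h : D (‖S‖⁻¹ • S) ≤ D T := h
      rw [hsm] at h
      calc D S = ‖S‖ ^ 2 * (‖S‖⁻¹ ^ 2 * D S) := by field_simp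
        _ ≤ _ := by gcongr
  have hpos : 0 < D T := by
    have h1 : D (e.symm : X →L[ℝ] Y) = 1 := by
      simp [D, ContinuousLinearMap.det]
    have h2 := hbd (e.symm : X →L[ℝ] Y)
    rw [h1] at h2
    by_contra hc
    nlinarith [sq_nonneg ‖(e.symm : X →L[ℝ] Y)‖]
  have key : ∀ A : X →L[ℝ] X, 1 ≤ |LinearMap.det (A : X →ₗ[ℝ] X)| → 1 ≤ ‖T.comp A‖ := by
    intro A hA
    have h1 : D (T.comp A) = D T * |LinearMap.det (A : X →ₗ[ℝ] X)| := by
      simp only [D]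
      rw [← ContinuousLinearMap.comp_assoc, ContinuousLinearMap.det,
        ContinuousLinearMap.toLinearMap_comp, LinearMap.det_comp, abs_mul]
    have h2 := hbd (T.comp A)
    rw [h1] at h2
    by_contra hc
    push Not at hc
    have h3 : ‖T.comp A‖ ^ 2 < 1 := by nlinarith [norm_nonneg (T.comp A)]
    nlinarith
  refine ⟨T, le_antisymm hT1 ?_, key⟩
  have := key (ContinuousLinearMap.id ℝ X) (by simp)
  simpa using this

/-- For 2-dimensional real normed spaces `X` and `Y`, there are `δ > 0`, norm-one
operators `T n : X → Y`, and `x₀ ∈ S_X` such that `‖T n x₀‖ → 1` but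
`dist(x₀, {x ∈ S_X : ‖T n x‖ = 1}) > δ` for every `n`. -/
theorem two_dimensional_fails_P2_quantitative
    {X Y : Type*} [NormedAddCommGroup X] [NormedSpace ℝ X]
    [NormedAddCommGroup Y] [NormedSpace ℝ Y]
    (hX : Module.finrank ℝ X = 2) (hY : Module.finrank ℝ Y = 2) :
    ∃ δ > (0 : ℝ), ∃ (T : ℕ → X →L[ℝ] Y) (x₀ : X), ‖x₀‖ = 1 ∧
      (∀ n, ‖T n‖ = 1) ∧
      Tendsto (fun n => ‖T n x₀‖) atTop (𝓝 1) ∧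
      ∀ n : ℕ, δ < Metric.infDist x₀ {x : X | ‖x‖ = 1 ∧ ‖T n x‖ = 1} := by
  have : FiniteDimensional ℝ X := Module.finite_of_finrank_pos (by omega)
  have : Nontrivial X := Module.nontrivial_of_finrank_pos (R := ℝ) (by omega)
  obtain ⟨T, hT1, key⟩ := aux_max hX hY
  obtain ⟨x₀, hx₀, hTx₀⟩ := aux_attain T
  rw [hT1] at hTx₀
  have hx0 : x₀ ≠ 0 := by
    intro h
    simp [h] at hx₀
  obtain ⟨y, hy⟩ := exists_linearIndependent_pair_of_one_lt_finrank (R := ℝ)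
    (by omega : 1 < Module.finrank ℝ X) hx0
  let b : Module.Basis (Fin 2) ℝ X := basisOfLinearIndependentOfCardEqFinrank hy (by simp [hX])
  have hb0 : b 0 = x₀ := by simp [b]
  let Q : X →L[ℝ] X := LinearMap.toContinuousLinearMap (Matrix.toLin b b !![0, 0; 0, 1])
  have hQ0 : Q x₀ = 0 := by
    rw [← hb0]
    simp [Q, Matrix.toLin_self]
  let A : ℝ → X →L[ℝ] X := fun ε => (1 - ε) • ContinuousLinearMap.id ℝ X + (3 * ε) • Q
  have hdet : ∀ ε, LinearMap.det (A ε : X →ₗ[ℝ] X) = (1 - ε) * (1 + 2 * ε) := by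
    intro ε
    have : (A ε : X →ₗ[ℝ] X) = Matrix.toLin b b !![1 - ε, 0; 0, 1 + 2 * ε] := by
      have h1 : (!![1 - ε, 0; 0, 1 + 2 * ε] : Matrix (Fin 2) (Fin 2) ℝ)
          = (1 - ε) • (1 : Matrix (Fin 2) (Fin 2) ℝ) + (3 * ε) • !![0, 0; 0, 1] := by
        ext i j
        fin_cases i <;> fin_cases j <;> simp
        ring
      rw [h1, map_add, map_smul, map_smul, Matrix.toLin_one]
      rfl
    rw [this, LinearMap.det_toLin, Matrix.det_fin_two_of]
    ring
  let S : ℝ → X →L[ℝ] Y := fun ε => T.comp (A ε)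
  have hSx : ∀ ε x, S ε x = (1 - ε) • T x + (3 * ε) • T (Q x) := by
    intro ε x
    simp [S, A]
  have hS1 : ∀ ε, 0 ≤ ε → ε ≤ 1 / 2 → 1 ≤ ‖S ε‖ := by
    intro ε h0 h1
    apply key
    rw [hdet]
    exact le_trans (by nlinarith) (le_abs_self _)
  let ε : ℕ → ℝ := fun n => 1 / 2 * (1 / ((n : ℝ) + 1))
  have hε0 : ∀ n, 0 < ε n := fun n => by positivity
  have hε1 : ∀ n, ε n ≤ 1 / 2 := by
    intro n
    have : 1 / ((n : ℝ) + 1) ≤ 1 := by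
      rw [div_le_one (by positivity)]
      linarith [(Nat.cast_nonneg n : (0 : ℝ) ≤ n)]
    simp only [ε]
    linarith
  have hεt : Tendsto ε atTop (𝓝 0) := by
    simpa [ε] using (tendsto_one_div_add_atTop_nhds_zero_nat (𝕜 := ℝ)).const_mul (2⁻¹ : ℝ)
  have hSc : Continuous S := by
    simp only [S, A]
    fun_prop
  have hS0 : S 0 = T := by
    ext x
    simp [hSx]
  have hn : ∀ n, 1 ≤ ‖S (ε n)‖ := fun n => hS1 _ (hε0 n).le (hε1 n)
  have hnorm : ∀ n, ‖(‖S (ε n)‖⁻¹ • S (ε n))‖ = 1 := by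
    intro n
    have := hn n
    rw [norm_smul, norm_inv, norm_norm, inv_mul_cancel₀ (by linarith)]
  refine ⟨1 / (4 * (‖Q‖ + 1)), by positivity, fun n => ‖S (ε n)‖⁻¹ • S (ε n), x₀, hx₀, hnorm,
    ?_, ?_⟩
  · have h1 : Tendsto (fun n => S (ε n)) atTop (𝓝 T) := by
      have := (hSc.tendsto 0).comp hεt
      rwa [hS0] at this
    have h2 : Tendsto (fun n => ‖S (ε n)‖⁻¹) atTop (𝓝 1) := by
      have := h1.norm.inv₀ (by simp [hT1])
      simpa [hT1] using this
    have h3 : Tendsto (fun n => S (ε n) x₀) atTop (𝓝 (T x₀)) :=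
      ((ContinuousLinearMap.apply ℝ Y x₀).continuous.tendsto T).comp h1
    have h4 := (h2.smul h3).norm
    simpa [hTx₀] using h4
  · intro n
    have hlt : 1 / (4 * (‖Q‖ + 1)) < 1 / (3 * (‖Q‖ + 1)) := by
      apply one_div_lt_one_div_of_lt
      · positivity
      · nlinarith [norm_nonneg Q]
    refine hlt.trans_le ?_
    rw [Metric.le_infDist]
    · rintro z ⟨hz1, hz⟩
      have hs := hn n
      have hSz : ‖S (ε n) z‖ = ‖S (ε n)‖ := by
        rw [smul_apply, norm_smul, norm_inv, norm_norm] at hz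
        field_simp at hz
        exact hz
      have h1 : 1 ≤ ‖S (ε n) z‖ := by rw [hSz]; exact hs
      have he0 := hε0 n
      have he1 := hε1 n
      have h2 : ‖S (ε n) z‖ ≤ (1 - ε n) * ‖T z‖ + (3 * ε n) * ‖T (Q z)‖ := by
        rw [hSx]
        refine (norm_add_le _ _).trans ?_
        rw [norm_smul, norm_smul, Real.norm_of_nonneg (by linarith),
          Real.norm_of_nonneg (by linarith)]
      have h3 : ‖T z‖ ≤ 1 := by simpa [hT1, hz1] using T.le_opNorm z
      have h4 : ‖T (Q z)‖ ≤ ‖Q z‖ := by simpa [hT1] using T.le_opNorm (Q z)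
      have h5 : ‖Q z‖ ≤ ‖Q‖ * dist x₀ z := by
        have := Q.le_opNorm (z - x₀)
        rwa [map_sub, hQ0, sub_zero, ← dist_eq_norm, dist_comm] at this
      have h6 : 1 / 3 ≤ ‖T (Q z)‖ := by
        by_contra hc
        push Not at hc
        nlinarith
      rw [div_le_iff₀ (by positivity)]
      nlinarith [dist_nonneg (x := x₀) (y := z)]
    · obtain ⟨z, hz1, hz⟩ := aux_attain (‖S (ε n)‖⁻¹ • S (ε n))
      exact ⟨z, hz1, hz.trans (hnorm n)⟩
end

section
/- Let Y be a 2-dimensional real normed space. Then for every ε ∈ [0, 2] there exist y₁, y₂ ∈ S_Y such that ‖y₁ − y₂‖ = ε and ‖y₁ + y₂‖ = √(4 − ε²). -/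
open Set Filter Topology

namespace HilbPair

/-- the area form -/
def om (z w : ℂ) : ℝ := z.re * w.im - z.im * w.re

/-- unit complex number -/
noncomputable def cis (t : ℝ) : ℂ := ⟨Real.cos t, Real.sin t⟩

lemma cis_eq (t : ℝ) : cis t = Complex.exp (t * Complex.I) := by
  apply Complex.ext
  · simp [cis, Complex.exp_ofReal_mul_I_re]
  · simp [cis, Complex.exp_ofReal_mul_I_im]

lemma cis_cont : Continuous cis := by
  have : cis = fun t : ℝ => Complex.exp (t * Complex.I) := funext cis_eq
  rw [this]; fun_prop

lemma cis_ne (t : ℝ) : cis t ≠ 0 := by rw [cis_eq]; exact Complex.exp_ne_zero _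

lemma area_little (g : ℝ → ℝ) (hg : Continuous g) (t η : ℝ) (hη : 0 < η) :
    ∀ᶠ t₁ in 𝓝 t, |g t * g t₁ * Real.sin (t₁ - t) -
      ((∫ r in (0:ℝ)..t₁, g r ^ 2) - ∫ r in (0:ℝ)..t, g r ^ 2)| ≤ η * |t₁ - t| := by
  have h1 : HasDerivAt (fun t₁ => g t * g t₁ * Real.sin (t₁ - t)) (g t ^ 2) t := by
    rw [hasDerivAt_iff_tendsto_slope]
    have hs : HasDerivAt (fun t₁ : ℝ => Real.sin (t₁ - t)) 1 t := by
      have := ((hasDerivAt_id t).sub_const t).sin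
      simpa using this
    rw [hasDerivAt_iff_tendsto_slope] at hs
    have hc : Tendsto (fun t₁ => g t * g t₁) (𝓝[≠] t) (𝓝 (g t * g t)) :=
      ((continuous_const.mul hg).tendsto t).mono_left nhdsWithin_le_nhds
    have := hc.mul hs
    rw [mul_one, ← sq] at this
    refine this.congr fun x => ?_
    simp [slope_def_field]
    ring
  have h2 : HasDerivAt (fun t₁ => ∫ r in (0:ℝ)..t₁, g r ^ 2) (g t ^ 2) t :=
    (by fun_prop : Continuous fun r => g r ^ 2).integral_hasStrictDerivAt 0 t |>.hasDerivAt
  have h3 := h1.sub h2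
  rw [sub_self, hasDerivAt_iff_isLittleO] at h3
  have := h3.def hη
  filter_upwards [this] with x hx
  simp only [Real.norm_eq_abs, Pi.sub_apply, sub_self, Real.sin_zero, mul_zero, smul_zero, sub_zero] at hx
  convert hx using 2
  ring

lemma key (g : ℝ → ℝ) (hg : Continuous g) (gpos : ∀ t, 0 < g t) (gper : ∀ t, g (t + Real.pi) = g t)
    (a b c z ρ : ℝ → ℝ) (ha : Continuous a) (hb : Continuous b) (hc : Continuous c)
    (hz : Continuous z)
    (pa : a (2 * Real.pi) = a 0 + Real.pi) (pb : b (2 * Real.pi) = b 0 + Real.pi)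
    (pc : c (2 * Real.pi) = c 0 + Real.pi) (pz : z (2 * Real.pi) = z 0 + Real.pi)
    (s κ τ : ℝ) (hκ : 0 ≤ κ) (hτ : τ = 1 ∨ τ = -1)
    (h : ∀ x ∈ Ico 0 (2 * Real.pi), ∀ᶠ y in 𝓝[>] x,
      0 ≤ Real.sin (a y - a x) ∧ 0 ≤ Real.sin (b y - b x) ∧ 0 ≤ Real.sin (c y - c x) ∧
      0 ≤ Real.sin (z y - z x) ∧
      g (a x) * g (a y) * Real.sin (a y - a x) + g (b x) * g (b y) * Real.sin (b y - b x) =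
      2 * (ρ x * ρ y) * (g (c x) * g (c y) * Real.sin (c y - c x)) +
      2 * s ^ 2 * (g (z x) * g (z y) * Real.sin (z y - z x)) ∧ 0 ≤ τ * (ρ x * ρ y - κ)) :
    0 ≤ τ * (1 - s ^ 2 - κ) := by
  have hpi := Real.pi_pos
  set G : ℝ → ℝ := fun t => ∫ r in (0:ℝ)..t, g r ^ 2 with hG
  have g2c : Continuous fun r => g r ^ 2 := by fun_prop
  have hGc : Continuous G := by
    rw [continuous_iff_continuousAt]
    intro t
    exact (g2c.integral_hasStrictDerivAt 0 t).hasDerivAt.continuousAt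
  have hper : Function.Periodic (fun r => g r ^ 2) Real.pi := fun r => by simp [gper]
  set P : ℝ := ∫ r in (0:ℝ)..Real.pi, g r ^ 2 with hP
  have hGp : ∀ t, G (t + Real.pi) - G t = P := by
    intro t
    have := hper.intervalIntegral_add_eq t 0
    rw [zero_add] at this
    rw [hP, ← this]
    exact intervalIntegral.integral_interval_sub_left (g2c.intervalIntegrable _ _) (g2c.intervalIntegrable _ _)
  have hPpos : 0 < P := by
    apply intervalIntegral.intervalIntegral_pos_of_pos (g2c.intervalIntegrable _ _) _ hpi
    intro x; have := gpos x; positivity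
  have main : ∀ η > 0, 0 ≤ τ * (2 * P * (1 - s ^ 2 - κ)) + η * (Real.pi * (2 + 2 * s ^ 2 + 2 * κ)) := by
    intro η hη
    set F : ℝ → ℝ := fun x => τ * (G (a x) + G (b x) - 2 * s ^ 2 * G (z x) - 2 * κ * G (c x)) +
      η * (a x + b x + 2 * s ^ 2 * z x + 2 * κ * c x) with hF
    have hFc : Continuous F := by fun_prop
    have hsub : Icc 0 (2 * Real.pi) ⊆ {x | F 0 ≤ F x} := by
      apply IsClosed.Icc_subset_of_forall_mem_nhdsWithin
      · exact (isClosed_le continuous_const hFc).inter isClosed_Icc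
      · simp
      · rintro x ⟨hx0, hx⟩
        have L : ∀ f : ℝ → ℝ, Continuous f → ∀ᶠ y in 𝓝[>] x,
            |g (f x) * g (f y) * Real.sin (f y - f x) - (G (f y) - G (f x))| ≤ η * |f y - f x| ∧
            (0 ≤ Real.sin (f y - f x) → 0 ≤ f y - f x) := by
          intro f hf
          have e1 := (hf.tendsto x).eventually (area_little g hg (f x) η hη)
          have e2 : ∀ᶠ y in 𝓝 x, -Real.pi < f y - f x := by
            have : Continuous fun y => f y - f x := by fun_prop
            apply (this.tendsto x).eventually (lt_mem_nhds _)
            simpa using hpi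
          filter_upwards [nhdsWithin_le_nhds e1, nhdsWithin_le_nhds e2] with y h1 h2
          refine ⟨h1, fun h0 => ?_⟩
          by_contra hlt
          push Not at hlt
          exact absurd h0 (not_le.2 (Real.sin_neg_of_neg_of_neg_pi_lt hlt h2))
        filter_upwards [h x hx, L a ha, L b hb, L c hc, L z hz] with y hy la lb lc lz
        obtain ⟨sa, sb, sc, sz, heq, hsg⟩ := hy
        obtain ⟨la, la'⟩ := la
        obtain ⟨lb, lb'⟩ := lb
        obtain ⟨lc, lc'⟩ := lc
        obtain ⟨lz, lz'⟩ := lz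
        rw [abs_of_nonneg (la' sa), abs_le] at la
        rw [abs_of_nonneg (lb' sb), abs_le] at lb
        rw [abs_of_nonneg (lc' sc), abs_le] at lc
        rw [abs_of_nonneg (lz' sz), abs_le] at lz
        have dc : 0 ≤ g (c x) * g (c y) * Real.sin (c y - c x) :=
          mul_nonneg (mul_nonneg (gpos _).le (gpos _).le) sc
        refine le_trans hx0 ?_
        have hs2 := sq_nonneg s
        have k1 := mul_nonneg hsg dc
        have z1 := mul_le_mul_of_nonneg_left lz.1 hs2
        have z2 := mul_le_mul_of_nonneg_left lz.2 hs2
        have c1 := mul_le_mul_of_nonneg_left lc.1 hκ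
        have c2 := mul_le_mul_of_nonneg_left lc.2 hκ
        simp only [hF]
        rcases hτ with rfl | rfl <;> nlinarith
    have := hsub (right_mem_Icc.2 (by positivity))
    simp only [mem_ofPred_eq, hF, pa, pb, pc, pz] at this
    have q1 := hGp (a 0)
    have q2 := hGp (b 0)
    have q3 := hGp (c 0)
    have q4 := hGp (z 0)
    rw [sub_eq_iff_eq_add] at q1 q2 q3 q4
    rw [q1, q2, q3, q4] at this
    linarith
  by_contra hneg
  push Not at hneg
  have hM : 0 < Real.pi * (2 + 2 * s ^ 2 + 2 * κ) := by positivity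
  have := main (-(τ * (1 - s ^ 2 - κ)) * P / (Real.pi * (2 + 2 * s ^ 2 + 2 * κ)))
    (div_pos (mul_pos (by linarith) hPpos) hM)
  rw [div_mul_cancel₀ _ hM.ne'] at this
  nlinarith

section norm
variable {Y : Type*} [NormedAddCommGroup Y] [NormedSpace ℝ Y] (T : ℂ ≃L[ℝ] Y)

/-- transported norm -/
noncomputable def N (z : ℂ) : ℝ := ‖T z‖

/-- radial function -/
noncomputable def g (t : ℝ) : ℝ := (N T (cis t))⁻¹

/-- point of the unit sphere -/
noncomputable def e (t : ℝ) : ℂ := (g T t : ℂ) * cis t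

lemma N_cont : Continuous (N T) := by unfold N; fun_prop

lemma N_pos {z : ℂ} (hz : z ≠ 0) : 0 < N T z := by
  unfold N; rw [norm_pos_iff]; simpa using hz

lemma N_smul (r : ℝ) (z : ℂ) : N T ((r : ℂ) * z) = |r| * N T z := by
  unfold N
  have : (r : ℂ) * z = r • z := by simp
  rw [this, map_smul, norm_smul, Real.norm_eq_abs]

lemma N_add (z w : ℂ) : N T (z + w) ≤ N T z + N T w := by
  unfold N; rw [map_add]; exact norm_add_le _ _

lemma N_neg (z : ℂ) : N T (-z) = N T z := by
  unfold N; rw [map_neg, norm_neg]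

lemma g_pos (t : ℝ) : 0 < g T t := inv_pos.2 (N_pos T (cis_ne t))

lemma g_cont : Continuous (g T) :=
  ((N_cont T).comp cis_cont).inv₀ fun t => (N_pos T (cis_ne t)).ne'

lemma cis_add_pi (t : ℝ) : cis (t + Real.pi) = - cis t := by
  apply Complex.ext <;> simp [cis]

lemma g_per (t : ℝ) : g T (t + Real.pi) = g T t := by
  simp [g, cis_add_pi, N_neg]

lemma e_add_pi (t : ℝ) : e T (t + Real.pi) = - e T t := by
  simp [e, g_per, cis_add_pi]

lemma e_sub_pi (t : ℝ) : e T (t - Real.pi) = - e T t := by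
  have := e_add_pi T (t - Real.pi)
  rw [sub_add_cancel] at this
  rw [this, neg_neg]

lemma e_cont : Continuous (e T) := by
  unfold e
  exact (Complex.continuous_ofReal.comp (g_cont T)).mul cis_cont

lemma N_e (t : ℝ) : N T (e T t) = 1 := by
  rw [e, N_smul, abs_of_pos (g_pos T t), g, inv_mul_cancel₀ (N_pos T (cis_ne t)).ne']

lemma e_re (t : ℝ) : (e T t).re = g T t * Real.cos t := by simp [e, cis]
lemma e_im (t : ℝ) : (e T t).im = g T t * Real.sin t := by simp [e, cis]

lemma om_e (t t₁ : ℝ) : om (e T t) (e T t₁) = g T t * g T t₁ * Real.sin (t₁ - t) := by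
  simp only [om, e_re, e_im, Real.sin_sub]; ring

lemma om_e_nonneg {t t₁ : ℝ} (h : t ≤ t₁) (h' : t₁ ≤ t + Real.pi) : 0 ≤ om (e T t) (e T t₁) := by
  rw [om_e]
  exact mul_nonneg (mul_nonneg (g_pos T t).le (g_pos T _).le)
    (Real.sin_nonneg_of_nonneg_of_le_pi (by linarith) (by linarith))

/-- sum of the diagonals -/
lemma diag {x y z : ℂ} (hx : N T x = 1) (hy : N T y = 1) (hz : N T z = 1) {l m : ℝ} (hl : 0 ≤ l)
    (hm : 0 ≤ m) (hlm : 1 ≤ l + m) (h : y = (l : ℂ) * x + (m : ℂ) * z) :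
    N T (y - x) ≤ N T (z - x) := by
  have hp : 0 < l + m := by linarith
  set k : ℝ := (l + m)⁻¹ with hk
  have hk0 : 0 < k := inv_pos.2 hp
  have hk1 : k ≤ 1 := inv_le_one_of_one_le₀ hlm
  have hkk : k * (l + m) = 1 := inv_mul_cancel₀ hp.ne'
  have hkkc : (k : ℂ) * (l + m) = 1 := by exact_mod_cast hkk
  have e1 : y - x = ((1 - k : ℝ) : ℂ) * y + ((k * m : ℝ) : ℂ) * (z - x) := by
    rw [h]; push_cast; linear_combination (x) * hkkc
  have e2 : z = ((k * l : ℝ) : ℂ) * (z - x) + (k : ℂ) * y := by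
    rw [h]; push_cast; linear_combination (-z) * hkkc
  have n1 : N T (y - x) ≤ (1 - k) + (k * m) * N T (z - x) := by
    conv_lhs => rw [e1]
    refine (N_add T _ _).trans ?_
    rw [N_smul, N_smul, hy, abs_of_nonneg (by linarith), abs_of_nonneg (by positivity), mul_one]
  have n2 : 1 ≤ (k * l) * N T (z - x) + k := by
    rw [← hz]
    conv_lhs => rw [e2]
    refine (N_add T _ _).trans ?_
    rw [N_smul, N_smul, hy, abs_of_nonneg (by positivity), abs_of_nonneg (by positivity), mul_one]
  have : (k * l) * N T (z - x) + (k * m) * N T (z - x) = N T (z - x) := by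
    linear_combination (N T (z - x)) * hkk
  linarith

lemma three {t₁ t₂ t₃ : ℝ} (h₁ : t₁ ≤ t₂) (h₂ : t₂ ≤ t₃) (h₃ : t₃ ≤ t₁ + Real.pi) :
    om (e T t₁) (e T t₃) ≤ om (e T t₁) (e T t₂) + om (e T t₂) (e T t₃) ∧
    N T (e T t₂ - e T t₁) ≤ N T (e T t₃ - e T t₁) ∧
    N T (e T t₂ - e T t₃) ≤ N T (e T t₁ - e T t₃) := by
  have p12 : 0 ≤ om (e T t₁) (e T t₂) := om_e_nonneg T h₁ (by linarith)
  have p23 : 0 ≤ om (e T t₂) (e T t₃) := om_e_nonneg T h₂ (by linarith)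
  have p13 : 0 ≤ om (e T t₁) (e T t₃) := om_e_nonneg T (h₁.trans h₂) h₃
  have hle2 : ∀ a b, N T (e T a - e T b) ≤ 2 := by
    intro a b
    rw [sub_eq_add_neg]
    refine (N_add T _ _).trans ?_
    rw [N_neg, N_e, N_e]; norm_num
  rcases eq_or_lt_of_le h₃ with h | h
  · have h0 : om (e T t₁) (e T t₃) = 0 := by rw [om_e, h]; simp
    have e3 : e T t₃ = - e T t₁ := by rw [h, e_add_pi]
    refine ⟨by linarith, ?_, ?_⟩
    · have : N T (e T t₃ - e T t₁) = 2 := by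
        rw [e3, show - e T t₁ - e T t₁ = ((-2 : ℝ) : ℂ) * e T t₁ by push_cast; ring, N_smul, N_e]
        norm_num
      rw [this]; exact hle2 _ _
    · have : N T (e T t₁ - e T t₃) = 2 := by
        rw [e3, show e T t₁ - - e T t₁ = ((2 : ℝ) : ℂ) * e T t₁ by push_cast; ring, N_smul, N_e]
        norm_num
      rw [this]; exact hle2 _ _
  rcases eq_or_lt_of_le (h₁.trans h₂) with h' | h'
  · have : t₂ = t₁ := by linarith
    subst this
    rw [← h']
    refine ⟨by linarith, le_rfl, le_rfl⟩
  have q13 : 0 < om (e T t₁) (e T t₃) := by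
    rw [om_e]
    exact mul_pos (mul_pos (g_pos T _) (g_pos T _))
      (Real.sin_pos_of_pos_of_lt_pi (by linarith) (by linarith))
  set A := om (e T t₁) (e T t₃) with hA
  set B := om (e T t₁) (e T t₂) with hB
  set C := om (e T t₂) (e T t₃) with hC
  have hid : e T t₂ = ((C / A : ℝ) : ℂ) * e T t₁ + ((B / A : ℝ) : ℂ) * e T t₃ := by
    have hid' : (A : ℂ) * e T t₂ = (C : ℂ) * e T t₁ + (B : ℂ) * e T t₃ := by
      apply Complex.ext
      · simp [hA, hB, hC, om]; ring
      · simp [hA, hB, hC, om]; ring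
    have hA0 : (A : ℂ) ≠ 0 := by exact_mod_cast q13.ne'
    push_cast
    field_simp
    linear_combination hid'
  have hl : 0 ≤ C / A := by positivity
  have hm : 0 ≤ B / A := by positivity
  have hlm : 1 ≤ C / A + B / A := by
    have := N_add T (((C / A : ℝ) : ℂ) * e T t₁) (((B / A : ℝ) : ℂ) * e T t₃)
    rw [← hid, N_smul, N_smul, N_e, N_e, N_e, abs_of_nonneg hl, abs_of_nonneg hm] at this
    linarith
  refine ⟨?_, ?_, ?_⟩
  · rw [← add_div, le_div_iff₀ q13] at hlm; linarith
  · exact diag T (N_e T _) (N_e T _) (N_e T _) hl hm hlm hid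
  · exact diag T (N_e T _) (N_e T _) (N_e T _) hm hl (by linarith) (by rw [add_comm]; exact hid)

lemma N_sub_comm (z w : ℂ) : N T (z - w) = N T (w - z) := by rw [← N_neg, neg_sub]

lemma mono {b b' a' a : ℝ} (h1 : b ≤ b') (h2 : b' ≤ a') (h3 : a' ≤ a) (h4 : a ≤ b + Real.pi) :
    N T (e T a' - e T b') ≤ N T (e T a - e T b) := by
  have := (three T (t₁ := b) (t₂ := a') (t₃ := a) (by linarith) h3 h4).2.1
  have := (three T (t₁ := b) (t₂ := b') (t₃ := a') (by linarith) h2 (by linarith)).2.2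
  rw [N_sub_comm T (e T b'), N_sub_comm T (e T b)] at this
  linarith

/-- admissible openings -/
def A (s σ : ℝ) : Set ℝ :=
  {d | d ∈ Icc 0 Real.pi ∧ 2 * s ≤ N T (e T ((σ + d) / 2) - e T ((σ - d) / 2))}

lemma exists_angles (s : ℝ) (hs0 : 0 < s) (hs1 : s < 1) : ∃ a b : ℝ → ℝ,
    Continuous a ∧ Continuous b ∧ Monotone a ∧ Monotone b ∧ (∀ x, a x + b x = x) ∧
    (∀ x, b x < a x) ∧ (∀ x, a x < b x + Real.pi) ∧
    a (2 * Real.pi) = a 0 + Real.pi ∧ b (2 * Real.pi) = b 0 + Real.pi ∧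
    ∀ x, N T (e T (a x) - e T (b x)) = 2 * s := by
  have hpi := Real.pi_pos
  have hec := e_cont T
  have hNc := N_cont T
  have fc : ∀ σ, Continuous fun d => N T (e T ((σ + d) / 2) - e T ((σ - d) / 2)) := by
    intro σ; fun_prop
  have f0 : ∀ σ, N T (e T ((σ + 0) / 2) - e T ((σ - 0) / 2)) = 0 := by
    intro σ; simp [N]
  have fpi : ∀ σ, N T (e T ((σ + Real.pi) / 2) - e T ((σ - Real.pi) / 2)) = 2 := by
    intro σ
    rw [show (σ + Real.pi) / 2 = (σ - Real.pi) / 2 + Real.pi by ring, e_add_pi]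
    rw [show ∀ w : ℂ, - w - w = ((-2 : ℝ) : ℂ) * w by intro w; push_cast; ring, N_smul, N_e]
    norm_num
  have hex : ∀ σ, ∃ d, IsLeast (A T s σ) d := by
    intro σ
    have hcl : IsClosed (A T s σ) := isClosed_Icc.inter (isClosed_le continuous_const (fc σ))
    have hne : (A T s σ).Nonempty := ⟨Real.pi, ⟨hpi.le, le_rfl⟩, by rw [fpi]; linarith⟩
    have hbd : BddBelow (A T s σ) := ⟨0, fun d hd => hd.1.1⟩
    exact ⟨_, hcl.csInf_mem hne hbd, fun d hd => csInf_le hbd hd⟩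
  choose δ hδ using hex
  have hval : ∀ σ, N T (e T ((σ + δ σ) / 2) - e T ((σ - δ σ) / 2)) = 2 * s := by
    intro σ
    refine le_antisymm ?_ (hδ σ).1.2
    have := intermediate_value_Icc (hδ σ).1.1.1 ((fc σ).continuousOn)
    rw [f0] at this
    obtain ⟨d, hd, hd'⟩ := this ⟨by positivity, (hδ σ).1.2⟩
    have h1 : d ∈ A T s σ := ⟨⟨hd.1, hd.2.trans (hδ σ).1.1.2⟩, hd'.ge⟩
    have h2 := (hδ σ).2 h1
    have : d = δ σ := le_antisymm hd.2 h2
    rw [← this]; exact hd'.le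
  have hpos : ∀ σ, 0 < δ σ := by
    intro σ
    refine lt_of_le_of_ne (hδ σ).1.1.1 fun h => ?_
    have := hval σ
    rw [← h, f0] at this; linarith
  have hlt : ∀ σ, δ σ < Real.pi := by
    intro σ
    refine lt_of_le_of_ne (hδ σ).1.1.2 fun h => ?_
    have := hval σ
    rw [h, fpi] at this; linarith
  have nest : ∀ σ σ', (σ - δ σ) / 2 < (σ' - δ σ') / 2 → (σ' + δ σ') / 2 < (σ + δ σ) / 2 → False := by
    intro σ σ' h1 h2
    set h := min ((σ' - δ σ') / 2 - (σ - δ σ) / 2) ((σ + δ σ) / 2 - (σ' + δ σ') / 2) with hh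
    have hp : 0 < h := lt_min (by linarith) (by linarith)
    have k1 : h ≤ (σ' - δ σ') / 2 - (σ - δ σ) / 2 := min_le_left _ _
    have k2 : h ≤ (σ + δ σ) / 2 - (σ' + δ σ') / 2 := min_le_right _ _
    have := hpos σ'
    have := hlt σ
    have hm : δ σ - 2 * h ∈ A T s σ := by
      refine ⟨⟨by linarith, by linarith⟩, ?_⟩
      rw [← hval σ']
      apply mono T <;> linarith
    have := (hδ σ).2 hm
    linarith
  have ma : Monotone fun σ => (σ + δ σ) / 2 := by
    intro σ σ' h
    by_contra hc
    push Not at hc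
    exact nest σ σ' (by linarith) hc
  have mb : Monotone fun σ => (σ - δ σ) / 2 := by
    intro σ σ' h
    by_contra hc
    push Not at hc
    exact nest σ' σ hc (by linarith)
  have hδc : Continuous δ := by
    have : LipschitzWith 1 δ := by
      apply LipschitzWith.of_le_add
      intro x y
      rw [Real.dist_eq]
      rcases le_total x y with h | h
      · have := ma h
        dsimp only at this
        have := neg_abs_le (x - y)
        linarith
      · have := ma h
        have := mb h
        dsimp only at *
        have := le_abs_self (x - y)
        linarith
    exact this.continuous
  have hper : δ (2 * Real.pi) = δ 0 := by
    have hA : A T s (2 * Real.pi) = A T s 0 := by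
      ext d
      simp only [A, mem_ofPred_eq]
      rw [show (2 * Real.pi + d) / 2 = (0 + d) / 2 + Real.pi by ring,
        show (2 * Real.pi - d) / 2 = (0 - d) / 2 + Real.pi by ring, e_add_pi, e_add_pi,
        show ∀ z w : ℂ, - z - - w = -(z - w) by intros; ring, N_neg]
    have h1 := hδ (2 * Real.pi)
    rw [hA] at h1
    exact h1.unique (hδ 0)
  refine ⟨_, _, by fun_prop, by fun_prop, ma, mb, ?_, ?_, ?_, ?_, ?_, hval⟩
  · intro x; ring
  · intro x; have := hpos x; linarith
  · intro x; have := hlt x; linarith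
  · rw [hper]; ring
  · rw [hper]; ring

lemma lift (w : ℝ → ℂ) (hw : Continuous w) (k : ℝ)
    (hre : ∀ x, 0 < (w x * cis (-(x / 2 + k))).re) (hp : w (2 * Real.pi) = - w 0) :
    ∃ c : ℝ → ℝ, Continuous c ∧ c (2 * Real.pi) = c 0 + Real.pi ∧
      ∀ x, w x = (N T (w x) : ℂ) * e T (c x) := by
  have hcc := cis_cont
  refine ⟨fun x => x / 2 + k + Complex.arg (w x * cis (-(x / 2 + k))), ?_, ?_, ?_⟩
  · rw [continuous_iff_continuousAt]
    intro x
    have h1 : ContinuousAt (fun x => w x * cis (-(x / 2 + k))) x := by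
      apply Continuous.continuousAt; fun_prop
    have h2 := (Complex.continuousAt_arg (Or.inl (hre x))).comp (f := fun x => w x * cis (-(x / 2 + k))) h1
    exact (by fun_prop : ContinuousAt (fun x : ℝ => x / 2 + k) x).add h2
  · have : w (2 * Real.pi) * cis (-(2 * Real.pi / 2 + k)) = w 0 * cis (-(0 / 2 + k)) := by
      have h := cis_add_pi (-(2 * Real.pi / 2 + k))
      rw [show -(2 * Real.pi / 2 + k) + Real.pi = -(0 / 2 + k) by ring] at h
      rw [hp, h]; ring
    dsimp only
    rw [this]; ring
  · intro x
    set q := w x * cis (-(x / 2 + k)) with hq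
    have hne : q ≠ 0 := by
      intro h; have := hre x; rw [← hq, h] at this; simp at this
    have hw1 : w x = (‖q‖ : ℂ) * cis (x / 2 + k + Complex.arg q) := by
      have h1 := Complex.norm_mul_exp_arg_mul_I q
      rw [cis_eq]
      push_cast
      rw [add_mul, Complex.exp_add, mul_left_comm, h1, hq, cis_eq]
      push_cast
      rw [mul_left_comm, ← Complex.exp_add]
      ring_nf
      simp
    have hc := N_pos T (cis_ne (x / 2 + k + Complex.arg q))
    have hN : N T (w x) = ‖q‖ * N T (cis (x / 2 + k + Complex.arg q)) := by
      conv_lhs => rw [hw1]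
      rw [N_smul, abs_of_nonneg (norm_nonneg _)]
    have hcC : (N T (cis (x / 2 + k + Complex.arg q)) : ℂ) ≠ 0 := by exact_mod_cast hc.ne'
    change w x = (N T (w x) : ℂ) * e T (x / 2 + k + Complex.arg q)
    rw [hN, e, g]
    refine hw1.trans ?_
    generalize cis (x / 2 + k + Complex.arg q) = r at *
    push_cast
    field_simp

lemma om_smul (r r' : ℝ) (z w : ℂ) : om ((r : ℂ) * z) ((r' : ℂ) * w) = r * r' * om z w := by
  simp [om]; ring

lemma core (s : ℝ) (hs0 : 0 < s) (hs1 : s < 1) :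
    ∃ x y : ℂ, N T x = 1 ∧ N T y = 1 ∧ N T (x - y) = 2 * s ∧
      N T (x + y) = 2 * Real.sqrt (1 - s ^ 2) := by
  have hpi := Real.pi_pos
  obtain ⟨a, b, ha, hb, ma, mb, hab, hlt, hgt, pa, pb, hv⟩ := exists_angles T s hs0 hs1
  have hec := e_cont T
  have hNc := N_cont T
  set u : ℝ → ℂ := fun x => ((1 / 2 : ℝ) : ℂ) * (e T (a x) + e T (b x)) with hu
  set v : ℝ → ℂ := fun x => ((1 / 2 : ℝ) : ℂ) * (e T (a x) - e T (b x)) with hvd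
  have huc : Continuous u := by fun_prop
  have hvc : Continuous v := by fun_prop
  have hNv : ∀ x, N T (v x) = s := by
    intro x; simp only [hvd]; rw [N_smul, hv, abs_of_pos (by norm_num)]; ring
  have hre1 : ∀ t r : ℝ, (e T t * cis r).re = g T t * Real.cos (t + r) := by
    intro t r; rw [Complex.mul_re, e_re, e_im, Real.cos_add]; simp [cis]; ring
  have hru : ∀ x, 0 < (u x * cis (-(x / 2 + 0))).re := by
    intro x
    simp only [hu]
    rw [mul_assoc, Complex.re_ofReal_mul, add_mul, Complex.add_re, hre1, hre1]
    have h1 := hab x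
    have h2 := hlt x
    have h3 := hgt x
    have c1 : 0 < Real.cos (a x + -(x / 2 + 0)) :=
      Real.cos_pos_of_mem_Ioo ⟨by linarith, by linarith⟩
    have c2 : 0 < Real.cos (b x + -(x / 2 + 0)) :=
      Real.cos_pos_of_mem_Ioo ⟨by linarith, by linarith⟩
    have := g_pos T (a x)
    have := g_pos T (b x)
    positivity
  have hrv : ∀ x, 0 < (v x * cis (-(x / 2 + Real.pi / 2))).re := by
    intro x
    simp only [hvd]
    rw [mul_assoc, Complex.re_ofReal_mul, sub_mul, Complex.sub_re, hre1, hre1]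
    have h1 := hab x
    have h2 := hlt x
    have h3 := hgt x
    have c1 : 0 < Real.cos (a x + -(x / 2 + Real.pi / 2)) :=
      Real.cos_pos_of_mem_Ioo ⟨by linarith, by linarith⟩
    have c2 : Real.cos (b x + -(x / 2 + Real.pi / 2)) < 0 := by
      rw [← Real.cos_neg]
      exact Real.cos_neg_of_pi_div_two_lt_of_lt (by linarith) (by linarith)
    have k1 := mul_pos (g_pos T (a x)) c1
    have k2 := mul_neg_of_pos_of_neg (g_pos T (b x)) c2
    linarith
  have pu : u (2 * Real.pi) = - u 0 := by
    simp only [hu, pa, pb, e_add_pi]; ring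
  have pv : v (2 * Real.pi) = - v 0 := by
    simp only [hvd, pa, pb, e_add_pi]; ring
  obtain ⟨c, hc, pc, hcu⟩ := lift T u huc 0 hru pu
  obtain ⟨z, hz, pz, hzv⟩ := lift T v hvc (Real.pi / 2) hrv pv
  have hune : ∀ x, 0 < N T (u x) := by
    intro x
    apply N_pos
    intro h; have := hru x; rw [h] at this; simp at this
  set ρ : ℝ → ℝ := fun x => N T (u x) with hρ
  have hρc : Continuous ρ := by fun_prop
  have loc : ∀ x, ∀ᶠ y in 𝓝[>] x,
      0 ≤ Real.sin (a y - a x) ∧ 0 ≤ Real.sin (b y - b x) ∧ 0 ≤ Real.sin (c y - c x) ∧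
      0 ≤ Real.sin (z y - z x) ∧
      g T (a x) * g T (a y) * Real.sin (a y - a x) + g T (b x) * g T (b y) * Real.sin (b y - b x) =
      2 * (ρ x * ρ y) * (g T (c x) * g T (c y) * Real.sin (c y - c x)) +
      2 * s ^ 2 * (g T (z x) * g T (z y) * Real.sin (z y - z x)) := by
    intro x
    have e1 : ∀ᶠ y in 𝓝 x, a y < b x + Real.pi := (ha.tendsto x).eventually (gt_mem_nhds (hgt x))
    have e2 : ∀ᶠ y in 𝓝 x, b y < a x := (hb.tendsto x).eventually (gt_mem_nhds (hlt x))
    filter_upwards [nhdsWithin_le_nhds e1, nhdsWithin_le_nhds e2, self_mem_nhdsWithin] with y h1 h2 hxy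
    have hxy : x < y := hxy
    have k1 := ma hxy.le
    have k2 := mb hxy.le
    have l1 := hlt x
    have l2 := hgt x
    have s1 : 0 ≤ Real.sin (a y - a x) :=
      Real.sin_nonneg_of_nonneg_of_le_pi (by linarith) (by linarith)
    have s2 : 0 ≤ Real.sin (b y - b x) :=
      Real.sin_nonneg_of_nonneg_of_le_pi (by linarith) (by linarith)
    have t1 := (three T (t₁ := a x) (t₂ := a y) (t₃ := b x + Real.pi) k1 h1.le (by linarith)).1
    have t2 := (three T (t₁ := a x - Real.pi) (t₂ := b x) (t₃ := b y) (by linarith) k2 (by linarith)).1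
    have t3 := (three T (t₁ := b x) (t₂ := a x) (t₃ := a y) (by linarith) k1 (by linarith)).1
    have t4 := (three T (t₁ := b x) (t₂ := b y) (t₃ := a x) k2 (by linarith) (by linarith)).1
    rw [e_add_pi] at t1
    rw [e_sub_pi] at t2
    have ou : 0 ≤ om (u x) (u y) := by
      simp only [hu]
      rw [om_smul]
      simp only [om, Complex.add_re, Complex.add_im, Complex.neg_re, Complex.neg_im] at *
      linarith
    have ov : 0 ≤ om (v x) (v y) := by
      simp only [hvd]
      rw [om_smul]
      simp only [om, Complex.sub_re, Complex.sub_im] at *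
      linarith
    have hid : om (e T (a x)) (e T (a y)) + om (e T (b x)) (e T (b y)) =
        2 * om (u x) (u y) + 2 * om (v x) (v y) := by
      simp only [hu, hvd]
      rw [om_smul, om_smul]
      simp only [om, Complex.sub_re, Complex.sub_im, Complex.add_re, Complex.add_im]
      ring
    have gg : ∀ p q, 0 < g T p * g T q := fun p q => mul_pos (g_pos T p) (g_pos T q)
    rw [hcu x, hcu y, om_smul, om_e] at ou hid
    rw [hzv x, hzv y, om_smul, om_e, hNv, hNv] at ov hid
    rw [om_e, om_e] at hid
    have s3 : 0 ≤ Real.sin (c y - c x) := by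
      have := nonneg_of_mul_nonneg_right ou (mul_pos (hune x) (hune y))
      exact nonneg_of_mul_nonneg_right this (gg _ _)
    have s4 : 0 ≤ Real.sin (z y - z x) := by
      have := nonneg_of_mul_nonneg_right ov (mul_pos hs0 hs0)
      exact nonneg_of_mul_nonneg_right this (gg _ _)
    refine ⟨s1, s2, s3, s4, ?_⟩
    rw [hid]; simp only [hρ]; ring
  have hI : (Icc (0:ℝ) (2 * Real.pi)).Nonempty := ⟨0, by simp [hpi.le]⟩
  obtain ⟨p, hp, hpmin⟩ := isCompact_Icc.exists_isMinOn hI hρc.continuousOn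
  obtain ⟨q, hq, hqmax⟩ := isCompact_Icc.exists_isMaxOn hI hρc.continuousOn
  have near : ∀ x ∈ Ico 0 (2 * Real.pi), ∀ᶠ y in 𝓝[>] x, y ∈ Icc 0 (2 * Real.pi) := by
    intro x hx
    filter_upwards [nhdsWithin_le_nhds (gt_mem_nhds hx.2), self_mem_nhdsWithin] with y h1 h2
    have h2 : x < y := h2
    exact ⟨by linarith [hx.1], h1.le⟩
  have B1 := key (g T) (g_cont T) (g_pos T) (g_per T) a b c z ρ ha hb hc hz pa pb pc pz s
    (ρ p * ρ p) 1 (mul_self_nonneg _) (Or.inl rfl) (by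
      intro x hx
      filter_upwards [loc x, near x hx] with y hy hy'
      refine ⟨hy.1, hy.2.1, hy.2.2.1, hy.2.2.2.1, hy.2.2.2.2, ?_⟩
      have := mul_le_mul (hpmin (Ico_subset_Icc_self hx)) (hpmin hy') (hune p).le (hune x).le
      linarith)
  have B2 := key (g T) (g_cont T) (g_pos T) (g_per T) a b c z ρ ha hb hc hz pa pb pc pz s
    (ρ q * ρ q) (-1) (mul_self_nonneg _) (Or.inr rfl) (by
      intro x hx
      filter_upwards [loc x, near x hx] with y hy hy'
      refine ⟨hy.1, hy.2.1, hy.2.2.1, hy.2.2.2.1, hy.2.2.2.2, ?_⟩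
      have := mul_le_mul (hqmax (Ico_subset_Icc_self hx)) (hqmax hy') (hune y).le (hune q).le
      linarith)
  have r1 : ρ p ≤ Real.sqrt (1 - s ^ 2) := Real.le_sqrt_of_sq_le (by linarith)
  have r2 : Real.sqrt (1 - s ^ 2) ≤ ρ q := Real.sqrt_le_iff.2 ⟨(hune q).le, by linarith⟩
  obtain ⟨x, hx⟩ := mem_range_of_exists_le_of_exists_ge hρc ⟨p, r1⟩ ⟨q, r2⟩
  refine ⟨e T (a x), e T (b x), N_e T _, N_e T _, hv x, ?_⟩
  rw [← hx]
  simp only [hρ, hu]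
  rw [N_smul, abs_of_pos (by norm_num)]; ring

end norm

end HilbPair

/-- In any 2-dimensional real normed space `Y`, for every `ε ∈ [0, 2]` there exist
unit vectors `y₁, y₂` with `‖y₁ - y₂‖ = ε` and `‖y₁ + y₂‖ = √(4 - ε²)`. -/
theorem exists_hilbertian_pair
    {Y : Type*} [NormedAddCommGroup Y] [NormedSpace ℝ Y]
    (hY : Module.finrank ℝ Y = 2) :
    ∀ ε ∈ Set.Icc (0 : ℝ) 2, ∃ y₁ y₂ : Y, ‖y₁‖ = 1 ∧ ‖y₂‖ = 1 ∧
      ‖y₁ - y₂‖ = ε ∧ ‖y₁ + y₂‖ = Real.sqrt (4 - ε ^ 2) := by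
  rintro ε ⟨h0, h2⟩
  have : FiniteDimensional ℝ Y := Module.finite_of_finrank_pos (by omega)
  let T : ℂ ≃L[ℝ] Y := ContinuousLinearEquiv.ofFinrankEq (by rw [hY, Complex.finrank_real_complex])
  have hu : ‖T (HilbPair.e T 0)‖ = 1 := HilbPair.N_e T 0
  rcases eq_or_lt_of_le h0 with rfl | h0
  · refine ⟨_, _, hu, hu, by simp, ?_⟩
    rw [← two_smul ℝ, norm_smul, hu]
    rw [show (4 - 0 ^ 2 : ℝ) = 2 ^ 2 by norm_num, Real.sqrt_sq (by norm_num)]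
    norm_num
  rcases eq_or_lt_of_le h2 with rfl | h2
  · refine ⟨_, -T (HilbPair.e T 0), hu, by rw [norm_neg, hu], ?_, ?_⟩
    · rw [sub_neg_eq_add, ← two_smul ℝ, norm_smul, hu]; norm_num
    · norm_num
  obtain ⟨x, y, hx, hy, hd, hs⟩ := HilbPair.core T (ε / 2) (by linarith) (by linarith)
  refine ⟨T x, T y, hx, hy, ?_, ?_⟩
  · rw [← map_sub]; refine Eq.trans hd ?_; ring
  · rw [← map_add]; refine Eq.trans hs ?_
    rw [show 4 - ε ^ 2 = 2 ^ 2 * (1 - (ε / 2) ^ 2) by ring, Real.sqrt_mul (by norm_num),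
      Real.sqrt_sq (by norm_num)]
end

section
/- Let X be a 2-dimensional real normed space whose norm does not satisfy the parallelogram law (equivalently, X is not isometric to a Hilbert space). Then there exist ε ∈ (0, 2) and x₁, x₂ ∈ S_X such that ‖x₁ − x₂‖ < ε and ‖x₁ + x₂‖ < √(4 − ε²). -/
open Set in
/-- A closed set of reals closed under midpoints of points at distance less than `π`
contains each interval of length less than `π` between two of its points. -/
lemma aux_interval (K : Set ℝ) (hK : IsClosed K)
    (hmid : ∀ s ∈ K, ∀ t ∈ K, s < t → t < s + Real.pi → (s + t) / 2 ∈ K)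
    (s t : ℝ) (hs : s ∈ K) (ht : t ∈ K) (hlt : t < s + Real.pi) :
    Icc s t ⊆ K := by
  intro r hr
  by_contra hrK
  obtain ⟨α, hα⟩ := (isCompact_Icc (a := s) (b := r)).inter_right hK |>.exists_isGreatest
    ⟨s, ⟨le_refl _, hr.1⟩, hs⟩
  obtain ⟨β, hβ⟩ := (isCompact_Icc (a := r) (b := t)).inter_right hK |>.exists_isLeast
    ⟨t, ⟨hr.2, le_refl _⟩, ht⟩
  obtain ⟨⟨⟨h1, h2⟩, h3⟩, h4⟩ := hα
  obtain ⟨⟨⟨k1, k2⟩, k3⟩, k4⟩ := hβ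
  have h5 : α < r := lt_of_le_of_ne h2 (fun h => hrK (h ▸ h3))
  have k5 : r < β := lt_of_le_of_ne k1 (fun h => hrK (h ▸ k3))
  have hm := hmid α h3 β k3 (by linarith) (by linarith)
  rcases le_total ((α + β) / 2) r with h | h
  · have := h4 ⟨⟨by linarith, h⟩, hm⟩
    linarith
  · have := k4 ⟨⟨h, by linarith⟩, hm⟩
    linarith

/-- Homogeneity: a quadratic bound on the circle extends. -/
lemma aux_polar (a b : ℝ) : ∃ r θ : ℝ, 0 ≤ r ∧ a = r * Real.cos θ ∧ b = r * Real.sin θ := by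
  refine ⟨‖(⟨a, b⟩ : ℂ)‖, Complex.arg ⟨a, b⟩, norm_nonneg _, ?_, ?_⟩
  · rw [Complex.norm_mul_cos_arg]
  · rw [Complex.norm_mul_sin_arg]

section aux
variable {X : Type*} [NormedAddCommGroup X] [NormedSpace ℝ X]

/-- If there are two independent contact points then the norm is Euclidean. -/
lemma aux_euclid (x y : X) (hxy : ∀ a b : ℝ, ‖a • x + b • y‖ ^ 2 ≤ a ^ 2 + b ^ 2)
    (h4 : ∀ u v : X, ‖u‖ = 1 → ‖v‖ = 1 → 4 ≤ ‖u + v‖ ^ 2 + ‖u - v‖ ^ 2)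
    (s t : ℝ) (hs : ‖Real.cos s • x + Real.sin s • y‖ = 1)
    (ht : ‖Real.cos t • x + Real.sin t • y‖ = 1) (hst : s < t) (hts : t < s + Real.pi)
    (a b : ℝ) : ‖a • x + b • y‖ ^ 2 = a ^ 2 + b ^ 2 := by
  set K : Set ℝ := {θ | ‖Real.cos θ • x + Real.sin θ • y‖ = 1} with hKdef
  have hK : IsClosed K := isClosed_eq (by fun_prop) (by fun_prop)
  have hle : ∀ θ : ℝ, ‖Real.cos θ • x + Real.sin θ • y‖ ^ 2 ≤ 1 := fun θ => by
    have := hxy (Real.cos θ) (Real.sin θ)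
    rwa [Real.cos_sq_add_sin_sq] at this
  have hmid : ∀ s ∈ K, ∀ t ∈ K, s < t → t < s + Real.pi → (s + t) / 2 ∈ K := by
    intro s hs t ht hst hts
    have h := h4 _ _ hs ht
    set m := (s + t) / 2 with hm
    set d := (t - s) / 2 with hd
    have e1 : s = m - d := by rw [hm, hd]; ring
    have e2 : t = m + d := by rw [hm, hd]; ring
    have hc : 0 < Real.cos d := Real.cos_pos_of_mem_Ioo ⟨by linarith, by linarith⟩
    have p1 : (Real.cos s • x + Real.sin s • y) + (Real.cos t • x + Real.sin t • y)
        = (2 * Real.cos d) • (Real.cos m • x + Real.sin m • y) := by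
      rw [e1, e2, Real.cos_sub, Real.cos_add, Real.sin_sub, Real.sin_add]; module
    have p2 : (Real.cos s • x + Real.sin s • y) - (Real.cos t • x + Real.sin t • y)
        = (2 * Real.sin d) • (Real.sin m • x + (-Real.cos m) • y) := by
      rw [e1, e2, Real.cos_sub, Real.cos_add, Real.sin_sub, Real.sin_add]; module
    rw [p1, p2, norm_smul, norm_smul, mul_pow, mul_pow, Real.norm_eq_abs, Real.norm_eq_abs,
      sq_abs, sq_abs] at h
    have q1 := hxy (Real.sin m) (-Real.cos m)
    have q2 := Real.sin_sq_add_cos_sq m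
    have q3 := Real.sin_sq_add_cos_sq d
    have q4 := hle m
    have q5 : ‖Real.sin m • x + (-Real.cos m) • y‖ ^ 2 ≤ 1 := by nlinarith
    have q6 : 1 ≤ ‖Real.cos m • x + Real.sin m • y‖ ^ 2 := by
      by_contra hcon
      push Not at hcon
      have r1 := mul_lt_mul_of_pos_left hcon (pow_pos hc 2)
      have r2 := mul_le_mul_of_nonneg_left q5 (sq_nonneg (Real.sin d))
      nlinarith
    change ‖Real.cos m • x + Real.sin m • y‖ = 1
    have q7 := norm_nonneg (Real.cos m • x + Real.sin m • y)
    nlinarith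
  have hper : ∀ θ ∈ K, θ + Real.pi ∈ K := by
    intro θ hθ
    change ‖_‖ = 1
    rw [Real.cos_add_pi, Real.sin_add_pi, ← hθ, ← norm_neg]
    congr 1; module
  have hper' : ∀ θ, ‖Real.cos (θ + Real.pi) • x + Real.sin (θ + Real.pi) • y‖
      = ‖Real.cos θ • x + Real.sin θ • y‖ := by
    intro θ
    rw [Real.cos_add_pi, Real.sin_add_pi, ← norm_neg]
    congr 1; module
  have I1 := aux_interval K hK hmid s t hs ht hts
  have I2 := aux_interval K hK hmid t (s + Real.pi) ht (hper s hs) (by linarith)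
  have hall : ∀ θ, ‖Real.cos θ • x + Real.sin θ • y‖ = 1 := by
    intro θ
    have hP : Function.Periodic (fun θ => ‖Real.cos θ • x + Real.sin θ • y‖) Real.pi := hper'
    obtain ⟨z, hz, hz'⟩ := hP.exists_mem_Ico Real.pi_pos θ s
    rw [hz']
    rcases le_total z t with h | h
    · exact I1 ⟨hz.1, h⟩
    · exact I2 ⟨h, hz.2.le⟩
  obtain ⟨r, θ, hr, rfl, rfl⟩ := aux_polar a b
  have : (r * Real.cos θ) • x + (r * Real.sin θ) • y
      = r • (Real.cos θ • x + Real.sin θ • y) := by module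
  rw [this, norm_smul, hall, Real.norm_eq_abs, mul_one, sq_abs]
  linear_combination (-r^2) * Real.sin_sq_add_cos_sq θ

/-- If the contact points all lie on one line, the ellipse can be enlarged. -/
lemma aux_enlarge (x y : X) (hxy : ∀ a b : ℝ, ‖a • x + b • y‖ ^ 2 ≤ a ^ 2 + b ^ 2)
    (hc : ∀ a b : ℝ, a ^ 2 + b ^ 2 = 1 → b ≠ 0 → ‖a • x + b • y‖ ≠ 1) :
    ∃ α β : ℝ, 1 < α * β ∧
      ∀ a b : ℝ, ‖a • (α • x) + b • (β • y)‖ ^ 2 ≤ a ^ 2 + b ^ 2 := by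
  set C : Set ℝ := {θ | Real.cos θ ^ 2 ≤ Real.sin θ ^ 2} ∩ Set.Icc (-Real.pi) Real.pi with hC
  have hCc : IsCompact C := by
    rw [hC, Set.inter_comm]
    exact isCompact_Icc.inter_right (isClosed_le (by fun_prop) (by fun_prop))
  have hCne : C.Nonempty := ⟨Real.pi / 2, by
    simp, by constructor <;> linarith [Real.pi_pos]⟩
  obtain ⟨θ₀, hθ₀, hmax⟩ := hCc.exists_isMaxOn hCne
    (f := fun θ => ‖Real.cos θ • x + Real.sin θ • y‖ ^ 2) (by fun_prop)
  set M := ‖Real.cos θ₀ • x + Real.sin θ₀ • y‖ ^ 2 with hM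
  have hM0 : 0 ≤ M := sq_nonneg _
  have hM1 : M < 1 := by
    have h1 := hxy (Real.cos θ₀) (Real.sin θ₀)
    have h2 := Real.cos_sq_add_sin_sq θ₀
    rw [h2] at h1
    refine lt_of_le_of_ne h1 fun h => ?_
    refine hc _ _ h2 ?_ ?_
    · intro h0
      have h3 := hθ₀.1
      simp only [Set.mem_ofPred_eq] at h3
      nlinarith
    · have := norm_nonneg (Real.cos θ₀ • x + Real.sin θ₀ • y)
      nlinarith
  have key : ∀ a b : ℝ, a ^ 2 ≤ b ^ 2 → ‖a • x + b • y‖ ^ 2 ≤ M * (a ^ 2 + b ^ 2) := by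
    intro a b hab
    have e1 : a = ‖(⟨a, b⟩ : ℂ)‖ * Real.cos (Complex.arg ⟨a, b⟩) := by
      rw [Complex.norm_mul_cos_arg]
    have e2 : b = ‖(⟨a, b⟩ : ℂ)‖ * Real.sin (Complex.arg ⟨a, b⟩) := by
      rw [Complex.norm_mul_sin_arg]
    have hθ := Complex.arg_mem_Ioc ⟨a, b⟩
    generalize ‖(⟨a, b⟩ : ℂ)‖ = r at *
    generalize Complex.arg ⟨a, b⟩ = θ at *
    subst e1 e2
    by_cases hr : r = 0
    · simp [hr]
    have hr2 : 0 < r ^ 2 := by positivity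
    have hmem : θ ∈ C := ⟨by
      rw [mul_pow, mul_pow] at hab
      exact le_of_mul_le_mul_left hab hr2, hθ.1.le, hθ.2⟩
    have h := hmax hmem
    simp only [Set.mem_ofPred_eq] at h
    have : (r * Real.cos θ) • x + (r * Real.sin θ) • y
        = r • (Real.cos θ • x + Real.sin θ • y) := by module
    rw [this, norm_smul, Real.norm_eq_abs, mul_pow, sq_abs]
    have h2 := Real.cos_sq_add_sin_sq θ
    calc _ ≤ r ^ 2 * M := mul_le_mul_of_nonneg_left h hr2.le
      _ = M * ((r * Real.cos θ) ^ 2 + (r * Real.sin θ) ^ 2) := by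
        linear_combination (-(M * r^2)) * h2
  set s := (1 - M) / 2 with hs
  have hs0 : 0 < s := by linarith
  have hs1 : s < 1 := by linarith
  have key2 : ∀ a b : ℝ, ‖a • x + b • y‖ ^ 2 ≤ (1 + s) * a ^ 2 + (1 - s) * b ^ 2 := by
    intro a b
    rcases le_total (a ^ 2) (b ^ 2) with h | h
    · refine (key a b h).trans ?_
      have := sq_nonneg a
      have := sq_nonneg b
      have : M = 1 - 2 * s := by rw [hs]; ring
      rw [this]; nlinarith
    · refine (hxy a b).trans ?_
      nlinarith
  refine ⟨(Real.sqrt (1 + s))⁻¹, (Real.sqrt (1 - s))⁻¹, ?_, ?_⟩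
  · rw [← mul_inv, ← Real.sqrt_mul (by linarith)]
    apply (one_lt_inv₀ (Real.sqrt_pos.2 (by nlinarith))).2
    rw [Real.sqrt_lt' one_pos]
    nlinarith
  · intro a b
    rw [smul_smul, smul_smul]
    refine (key2 _ _).trans (le_of_eq ?_)
    rw [mul_pow, mul_pow, inv_pow, inv_pow, Real.sq_sqrt (by linarith), Real.sq_sqrt (by linarith)]
    have : 1 + s ≠ 0 := by linarith
    have : 1 - s ≠ 0 := by linarith
    field_simp

/-- Maximal inscribed ellipse. -/
lemma aux_max_s9 [FiniteDimensional ℝ X] (e₀ e₁ : X) (f g : X →ₗ[ℝ] ℝ)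
    (hf0 : f e₀ = 1) (hf1 : f e₁ = 0) (hg0 : g e₀ = 0) (hg1 : g e₁ = 1) :
    ∃ x y : X, (∀ a b : ℝ, ‖a • x + b • y‖ ^ 2 ≤ a ^ 2 + b ^ 2) ∧ 0 < f x * g y - g x * f y ∧
      ∀ x' y' : X, (∀ a b : ℝ, ‖a • x' + b • y'‖ ^ 2 ≤ a ^ 2 + b ^ 2) →
        f x' * g y' - g x' * f y' ≤ f x * g y - g x * f y := by
  have hfc := f.continuous_of_finiteDimensional
  have hgc := g.continuous_of_finiteDimensional
  set S : Set (X × X) := {p | ∀ a b : ℝ, ‖a • p.1 + b • p.2‖ ^ 2 ≤ a ^ 2 + b ^ 2} with hS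
  have hScl : IsClosed S := by
    rw [hS]
    simp only [Set.ofPred_forall]
    exact isClosed_iInter fun a => isClosed_iInter fun b => isClosed_le (by fun_prop) (by fun_prop)
  have : ProperSpace X := FiniteDimensional.proper ℝ X
  have hSc : IsCompact S := by
    refine (isCompact_closedBall (0 : X × X) 1).of_isClosed_subset hScl ?_
    intro p hp
    have h1 := hp 1 0
    have h2 := hp 0 1
    simp only [one_smul, zero_smul, add_zero, zero_add] at h1 h2
    rw [mem_closedBall_zero_iff, Prod.norm_def]
    have := norm_nonneg p.1
    have := norm_nonneg p.2
    exact max_le (by nlinarith) (by nlinarith)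
  set c : ℝ := (‖e₀‖ + ‖e₁‖ + 1)⁻¹ with hcdef
  have hn0 := norm_nonneg e₀
  have hn1 := norm_nonneg e₁
  have hcpos : 0 < c := by positivity
  have hc1 : c * (‖e₀‖ + ‖e₁‖ + 1) = 1 := inv_mul_cancel₀ (by positivity)
  have hmem : (c • e₀, c • e₁) ∈ S := by
    intro a b
    have h1 : ‖a • c • e₀ + b • c • e₁‖ ≤ |a| * (c * ‖e₀‖) + |b| * (c * ‖e₁‖) := by
      refine (norm_add_le _ _).trans (le_of_eq ?_)
      simp only [norm_smul, Real.norm_eq_abs, abs_of_pos hcpos]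
    have h2 := pow_le_pow_left₀ (norm_nonneg _) h1 2
    refine h2.trans ?_
    have hp : 0 ≤ c * ‖e₀‖ := by positivity
    have hq : 0 ≤ c * ‖e₁‖ := by positivity
    have hpq : c * ‖e₀‖ + c * ‖e₁‖ ≤ 1 := by nlinarith
    generalize c * ‖e₀‖ = p at *
    generalize c * ‖e₁‖ = q at *
    rw [← sq_abs a, ← sq_abs b]
    have hpq2 : p ^ 2 + q ^ 2 ≤ 1 := by nlinarith
    have : (|a| * p + |b| * q) ^ 2 ≤ (|a| ^ 2 + |b| ^ 2) * (p ^ 2 + q ^ 2) := by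
      nlinarith [sq_nonneg (|a| * q - |b| * p)]
    refine this.trans ?_
    exact mul_le_of_le_one_right (by positivity) hpq2
  obtain ⟨p, hp, hmax⟩ := hSc.exists_isMaxOn ⟨_, hmem⟩
    (f := fun p : X × X => f p.1 * g p.2 - g p.1 * f p.2) (by fun_prop)
  refine ⟨p.1, p.2, hp, ?_, fun x' y' h => hmax (show (x', y') ∈ S from h)⟩
  refine lt_of_lt_of_le ?_ (hmax hmem)
  simp [hf0, hf1, hg0, hg1, hcpos]

lemma aux_day (hX : Module.finrank ℝ X = 2)
    (h4 : ∀ u v : X, ‖u‖ = 1 → ‖v‖ = 1 → 4 ≤ ‖u + v‖ ^ 2 + ‖u - v‖ ^ 2) (u v : X) :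
    ‖u + v‖ ^ 2 + ‖u - v‖ ^ 2 = 2 * ‖u‖ ^ 2 + 2 * ‖v‖ ^ 2 := by
  have : FiniteDimensional ℝ X := Module.finite_of_finrank_pos (by omega)
  let B := Module.finBasisOfFinrankEq ℝ X hX
  obtain ⟨x, y, hxy, hpos, hmax⟩ := aux_max_s9 (B 0) (B 1) (B.coord 0) (B.coord 1)
    (by simp) (by simp) (by simp) (by simp)
  have hext : ∀ u v : X, B.coord 0 u = B.coord 0 v → B.coord 1 u = B.coord 1 v → u = v := by
    intro u v h0 h1
    apply B.ext_elem
    intro i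
    fin_cases i
    · exact h0
    · exact h1
  generalize B.coord 0 = f at *
  generalize B.coord 1 = g at *
  set D := f x * g y - g x * f y with hD
  have hspan : ∀ u : X, ∃ a b : ℝ, u = a • x + b • y := by
    intro u
    refine ⟨(f u * g y - g u * f y) / D, (f x * g u - g x * f u) / D, hext _ _ ?_ ?_⟩ <;>
    · simp only [map_add, map_smul, smul_eq_mul]
      field_simp
      rw [hD]; ring
  have hcontact : ∃ s t : ℝ, ‖Real.cos s • x + Real.sin s • y‖ = 1 ∧
      ‖Real.cos t • x + Real.sin t • y‖ = 1 ∧ s < t ∧ t < s + Real.pi := by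
    by_contra hcon
    push Not at hcon
    obtain ⟨k, hk⟩ : ∃ k : ℝ, ∀ t, ‖Real.cos t • x + Real.sin t • y‖ = 1 →
        Real.sin (t - k) = 0 := by
      by_cases hex : ∃ k, ‖Real.cos k • x + Real.sin k • y‖ = 1
      · obtain ⟨k, hk⟩ := hex
        refine ⟨k, fun t ht => ?_⟩
        have hP : Function.Periodic (fun θ => ‖Real.cos θ • x + Real.sin θ • y‖) Real.pi := by
          intro θ
          simp only
          rw [Real.cos_add_pi, Real.sin_add_pi, ← norm_neg]
          congr 1; module
        have e : t - toIcoDiv Real.pi_pos k t • Real.pi = toIcoMod Real.pi_pos k t := rfl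
        have hz := toIcoMod_mem_Ico Real.pi_pos k t
        have hz' := hP.sub_zsmul_eq (x := t) (toIcoDiv Real.pi_pos k t)
        rw [e] at hz'
        rw [ht] at hz'
        have hzk : toIcoMod Real.pi_pos k t = k := by
          by_contra hne
          have := hcon k _ hk hz' (lt_of_le_of_ne hz.1 (Ne.symm hne))
          linarith [hz.2]
        rw [hzk] at e
        have : t - k = toIcoDiv Real.pi_pos k t * Real.pi := by
          rw [zsmul_eq_mul] at e; linarith
        rw [this]; exact Real.sin_int_mul_pi _
      · push Not at hex
        exact ⟨0, fun t ht => absurd ht (hex t)⟩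
    have hk2 := Real.cos_sq_add_sin_sq k
    have hrot : ∀ a b : ℝ, a • (Real.cos k • x + Real.sin k • y)
        + b • ((-Real.sin k) • x + Real.cos k • y)
        = (a * Real.cos k - b * Real.sin k) • x + (a * Real.sin k + b * Real.cos k) • y := by
      intro a b; module
    obtain ⟨α, β, hαβ, hnew⟩ := aux_enlarge (Real.cos k • x + Real.sin k • y)
      ((-Real.sin k) • x + Real.cos k • y)
      (by
        intro a b
        rw [hrot]
        refine (hxy _ _).trans (le_of_eq ?_)
        linear_combination (a ^ 2 + b ^ 2) * hk2)
      (by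
        intro a b hab hb h1
        obtain ⟨r, θ, hr, rfl, rfl⟩ := aux_polar a b
        have hr1 : r = 1 := by
          have := Real.cos_sq_add_sin_sq θ
          have : r ^ 2 = 1 := by linear_combination hab - r ^ 2 * this
          nlinarith
        subst hr1
        have h2 := hk (θ + k) (by
          rw [← h1, hrot, Real.cos_add, Real.sin_add]
          simp only [one_mul]
          congr 3; ring)
        rw [add_sub_cancel_right] at h2
        exact hb (by rw [h2, mul_zero]))
    have h := hmax _ _ hnew
    simp only [map_add, map_smul, smul_eq_mul] at h
    have h' : α * β * D ≤ D := by
      refine le_trans (le_of_eq ?_) h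
      rw [hD]
      linear_combination (-(α * β * (f x * g y - g x * f y))) * hk2
    nlinarith
  obtain ⟨s, t, hs, ht, hst, hts⟩ := hcontact
  have hE := aux_euclid x y hxy h4 s t hs ht hst hts
  obtain ⟨a, b, rfl⟩ := hspan u
  obtain ⟨c, d, rfl⟩ := hspan v
  have e1 : a • x + b • y + (c • x + d • y) = (a + c) • x + (b + d) • y := by module
  have e2 : a • x + b • y - (c • x + d • y) = (a - c) • x + (b - d) • y := by module
  rw [e1, e2, hE, hE, hE, hE]
  ring

end aux

/-- If the norm of the 2-dimensional real normed space `X` does not satisfy the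
parallelogram law, then there are `ε ∈ (0, 2)` and unit vectors `x₁, x₂` with
`‖x₁ - x₂‖ < ε` and `‖x₁ + x₂‖ < √(4 - ε²)`. -/
theorem exists_subhilbertian_pair_of_not_parallelogram
    {X : Type*} [NormedAddCommGroup X] [NormedSpace ℝ X]
    (hX : Module.finrank ℝ X = 2)
    (hnotH : ∃ u v : X,
      ‖u + v‖ ^ 2 + ‖u - v‖ ^ 2 ≠ 2 * ‖u‖ ^ 2 + 2 * ‖v‖ ^ 2) :
    ∃ ε ∈ Set.Ioo (0 : ℝ) 2, ∃ x₁ x₂ : X, ‖x₁‖ = 1 ∧ ‖x₂‖ = 1 ∧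
      ‖x₁ - x₂‖ < ε ∧ ‖x₁ + x₂‖ < Real.sqrt (4 - ε ^ 2) := by
  by_contra hcon
  obtain ⟨u, v, huv⟩ := hnotH
  refine huv (aux_day hX ?_ u v)
  intro p q hp hq
  by_contra hlt
  push Not at hlt
  apply hcon
  have h1 := norm_nonneg (p + q)
  have h2 := norm_nonneg (p - q)
  set A := ‖p + q‖
  set B := ‖p - q‖
  have hBs : B < Real.sqrt (4 - A ^ 2) := Real.lt_sqrt_of_sq_lt (by linarith)
  obtain ⟨ε, hε1, hε2⟩ := exists_between hBs
  have hε0 : 0 < ε := lt_of_le_of_lt h2 hε1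
  have hε3 : ε ^ 2 < 4 - A ^ 2 := (Real.lt_sqrt hε0.le).1 hε2
  refine ⟨ε, ⟨hε0, by nlinarith⟩, p, q, hp, hq, hε1, Real.lt_sqrt_of_sq_lt (by linarith)⟩
end

section
/- Let X be a 2-dimensional real inner product (Hilbert) space and Y a 2-dimensional real normed space. Then there exists a bounded linear operator T : X → Y with ‖T‖ = 1 such that T(B_X) ⊆ B_Y and there are two linearly independent points y₁, y₂ ∈ T(B_X) ∩ S_Y and a functional y₁* ∈ S_{Y*} with y₁*(y₁) = 1 such that y₂ ∉ F(y₁*) ∪ F(−y₁*). -/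
lemma hc_max {X Y : Type*} [NormedAddCommGroup X] [InnerProductSpace ℝ X]
    [NormedAddCommGroup Y] [NormedSpace ℝ Y] [FiniteDimensional ℝ X] [FiniteDimensional ℝ Y]
    (hX : Module.finrank ℝ X = 2) (E : Y ≃L[ℝ] X) :
    ∃ T : X →L[ℝ] Y, ‖T‖ = 1 ∧ LinearMap.det ((E : Y →ₗ[ℝ] X) ∘ₗ (T : X →ₗ[ℝ] Y)) ≠ 0 ∧
      ∀ S : X →L[ℝ] Y, ‖S‖ ≤ 1 → |LinearMap.det ((E : Y →ₗ[ℝ] X) ∘ₗ (S : X →ₗ[ℝ] Y))| ≤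
        |LinearMap.det ((E : Y →ₗ[ℝ] X) ∘ₗ (T : X →ₗ[ℝ] Y))| := by
  haveI : ProperSpace (X →L[ℝ] Y) := FiniteDimensional.proper ℝ _
  haveI : Nontrivial X := Module.nontrivial_of_finrank_pos (R := ℝ) (by omega)
  have hcont : Continuous fun S : X →L[ℝ] Y =>
      |LinearMap.det ((E : Y →ₗ[ℝ] X) ∘ₗ (S : X →ₗ[ℝ] Y))| := by
    have h1 : Continuous fun S : X →L[ℝ] Y => (E : Y →L[ℝ] X).comp S := by fun_prop
    exact ((ContinuousLinearMap.continuous_det (𝕜 := ℝ) (E := X)).comp h1).abs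
  obtain ⟨T, hT, hmax⟩ := (isCompact_closedBall (0 : X →L[ℝ] Y) 1).exists_isMaxOn
    ⟨0, by simp⟩ hcont.continuousOn
  have hmax' : ∀ S : X →L[ℝ] Y, ‖S‖ ≤ 1 → |LinearMap.det ((E : Y →ₗ[ℝ] X) ∘ₗ (S : X →ₗ[ℝ] Y))| ≤
        |LinearMap.det ((E : Y →ₗ[ℝ] X) ∘ₗ (T : X →ₗ[ℝ] Y))| := fun S hS =>
    hmax (by simpa using hS)
  have hT1 : ‖T‖ ≤ 1 := by simpa using hT
  have hscale : ∀ (S : X →L[ℝ] Y) (c : ℝ),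
      |LinearMap.det ((E : Y →ₗ[ℝ] X) ∘ₗ ((c • S : X →L[ℝ] Y) : X →ₗ[ℝ] Y))| =
      c ^ 2 * |LinearMap.det ((E : Y →ₗ[ℝ] X) ∘ₗ (S : X →ₗ[ℝ] Y))| := by
    intro S c
    have : (E : Y →ₗ[ℝ] X) ∘ₗ ((c • S : X →L[ℝ] Y) : X →ₗ[ℝ] Y) =
        c • ((E : Y →ₗ[ℝ] X) ∘ₗ (S : X →ₗ[ℝ] Y)) := by
      ext x; simp
    rw [this, LinearMap.det_smul, hX, abs_mul, abs_of_nonneg (sq_nonneg c)]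
  have hdet : 0 < |LinearMap.det ((E : Y →ₗ[ℝ] X) ∘ₗ (T : X →ₗ[ℝ] Y))| := by
    set S : X →L[ℝ] Y := (E.symm : X →L[ℝ] Y)
    have hS : S ≠ 0 := by
      intro h
      obtain ⟨x, hx⟩ := exists_ne (0 : X)
      have : S x = 0 := by rw [h]; rfl
      exact hx (by simpa [S] using this)
    have hSn : 0 < ‖S‖ := norm_pos_iff.2 hS
    have h1 := hmax' (‖S‖⁻¹ • S) (by rw [norm_smul]; simp [hSn.ne'])
    rw [hscale] at h1
    have h2 : (E : Y →ₗ[ℝ] X) ∘ₗ (S : X →ₗ[ℝ] Y) = LinearMap.id := by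
      ext x; simp [S]
    rw [h2] at h1
    simp only [LinearMap.det_id, abs_one, mul_one] at h1
    exact lt_of_lt_of_le (by positivity) h1
  refine ⟨T, ?_, abs_pos.1 hdet, hmax'⟩
  have hT0 : 0 < ‖T‖ := by
    rw [norm_pos_iff]
    rintro rfl
    have h0 := hscale (0 : X →L[ℝ] Y) 0
    rw [zero_smul] at h0
    norm_num at h0
    rw [ContinuousLinearMap.toLinearMap_zero, LinearMap.comp_zero, LinearMap.det_zero, hX] at hdet
    norm_num at hdet
  have h1 := hmax' (‖T‖⁻¹ • T) (by rw [norm_smul]; simp [hT0.ne'])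
  rw [hscale] at h1
  have h2 : (‖T‖⁻¹) ^ 2 ≤ 1 := by
    by_contra h; push Not at h; nlinarith
  have h3 : ‖T‖⁻¹ ≤ 1 := by
    rwa [sq_le_one_iff₀ (by positivity)] at h2
  exact le_antisymm hT1 ((inv_le_one₀ hT0).1 h3)

lemma hc_contact {X Y : Type*} [NormedAddCommGroup X] [InnerProductSpace ℝ X]
    [NormedAddCommGroup Y] [NormedSpace ℝ Y] [FiniteDimensional ℝ X] [FiniteDimensional ℝ Y]
    (hX : Module.finrank ℝ X = 2) (E : Y ≃L[ℝ] X) (T : X →L[ℝ] Y) (hT : ‖T‖ = 1)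
    (hdet : LinearMap.det ((E : Y →ₗ[ℝ] X) ∘ₗ (T : X →ₗ[ℝ] Y)) ≠ 0)
    (hmax : ∀ S : X →L[ℝ] Y, ‖S‖ ≤ 1 → |LinearMap.det ((E : Y →ₗ[ℝ] X) ∘ₗ (S : X →ₗ[ℝ] Y))| ≤
        |LinearMap.det ((E : Y →ₗ[ℝ] X) ∘ₗ (T : X →ₗ[ℝ] Y))|) (e : X) (he : ‖e‖ = 1) :
    ∃ x : X, ‖x‖ = 1 ∧ ‖T x‖ = 1 ∧ (inner ℝ e x) ^ 2 < 1 := by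
  by_contra hno
  push Not at hno
  have hle : ∀ x, ‖T x‖ ≤ ‖x‖ := fun x => by simpa [hT] using T.le_opNorm x
  obtain ⟨δ, hδ0, hδ1, hδ⟩ : ∃ δ : ℝ, 0 < δ ∧ δ ≤ 1 ∧
      ∀ x : X, ‖x‖ = 1 → (inner ℝ e x) ^ 2 ≤ 9 / 10 → ‖T x‖ ≤ 1 - δ := by
    have hK : IsCompact (Metric.sphere (0 : X) 1 ∩ {x | (inner ℝ e x) ^ 2 ≤ 9 / 10}) :=
      (isCompact_sphere _ _).inter_right (isClosed_le (by fun_prop) continuous_const)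
    rcases (Metric.sphere (0 : X) 1 ∩ {x | (inner ℝ e x) ^ 2 ≤ 9 / 10}).eq_empty_or_nonempty
      with h | h
    · refine ⟨1, one_pos, le_rfl, fun x hx hx2 => ?_⟩
      have : x ∈ Metric.sphere (0 : X) 1 ∩ {x | (inner ℝ e x) ^ 2 ≤ 9 / 10} :=
        ⟨by simpa using hx, hx2⟩
      rw [h] at this
      exact this.elim
    · obtain ⟨z, ⟨hz1, hz2⟩, hz⟩ := hK.exists_isMaxOn h (f := fun x => ‖T x‖)
        (by fun_prop)
      have hz1' : ‖z‖ = 1 := by simpa using hz1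
      have hz2' : (inner ℝ e z) ^ 2 ≤ 9 / 10 := hz2
      have hlt : ‖T z‖ < 1 := by
        refine lt_of_le_of_ne (hz1' ▸ hle z) fun hh => ?_
        have := hno z hz1' hh
        linarith
      refine ⟨1 - ‖T z‖, by linarith, by linarith [norm_nonneg (T z)], fun x hx hx2 => ?_⟩
      have : ‖T x‖ ≤ ‖T z‖ := hz ⟨by simpa using hx, hx2⟩
      linarith
  obtain ⟨c, hc⟩ : ∃ c : ℝ, δ = 20 * c := ⟨δ / 20, by ring⟩
  have hc0 : 0 < c := by linarith
  have hc1 : c ≤ 1 / 20 := by linarith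
  set D : X →L[ℝ] X := ContinuousLinearMap.id ℝ X - c • (innerSL ℝ e).smulRight e with hD
  have hDx : ∀ x, D x = x - (c * inner ℝ e x) • e := fun x => by
    simp [hD, mul_smul]
  have hDdet : LinearMap.det (D : X →ₗ[ℝ] X) = 1 - c := by
    have : (D : X →ₗ[ℝ] X) =
        LinearMap.transvection ((-c) • ((innerSL ℝ e : X →L[ℝ] ℝ) : X →ₗ[ℝ] ℝ)) e := by
      ext x
      simp [hDx, LinearMap.transvection.apply, sub_eq_add_neg]
    rw [this, LinearMap.transvection.det]
    simp [he, sub_eq_add_neg]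
  have key := hmax ((1 + 3 * c / 4) • T.comp D) ?_
  · have h1 : (E : Y →ₗ[ℝ] X) ∘ₗ (((1 + 3 * c / 4) • T.comp D : X →L[ℝ] Y) : X →ₗ[ℝ] Y) =
        (1 + 3 * c / 4) • (((E : Y →ₗ[ℝ] X) ∘ₗ (T : X →ₗ[ℝ] Y)) ∘ₗ (D : X →ₗ[ℝ] X)) := by
      ext x; simp
    rw [h1, LinearMap.det_smul, hX, LinearMap.det_comp, hDdet, abs_mul, abs_mul,
      abs_of_nonneg (sq_nonneg _), abs_of_nonneg (by linarith : (0 : ℝ) ≤ 1 - c)] at key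
    have hp := abs_pos.2 hdet
    have : 1 < (1 + 3 * c / 4) ^ 2 * (1 - c) := by
      nlinarith [mul_pos hc0 hc0, mul_nonneg (mul_pos hc0 hc0).le (sub_nonneg.2 hc1)]
    nlinarith
  · refine ContinuousLinearMap.opNorm_le_of_unit_norm zero_le_one fun x hx => ?_
    have hn : ‖((1 + 3 * c / 4) • T.comp D) x‖ = (1 + 3 * c / 4) * ‖T (D x)‖ := by
      simp [norm_smul, abs_of_pos (by linarith : 0 < 1 + 3 * c / 4)]
    rw [hn]
    have hip : |inner ℝ e x| ≤ 1 := by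
      simpa [he, hx] using abs_real_inner_le_norm e x
    rcases le_total ((inner ℝ e x) ^ 2) (9 / 10) with h | h
    · have h1 := hδ x hx h
      have h2 : ‖T (D x)‖ ≤ 1 - 20 * c + c := by
        rw [hDx, map_sub, map_smul]
        refine (norm_sub_le _ _).trans (add_le_add (hc ▸ h1) ?_)
        rw [norm_smul, Real.norm_eq_abs, abs_mul, abs_of_pos hc0]
        have := hle e
        rw [he] at this
        have h3 : |inner ℝ e x| * ‖T e‖ ≤ 1 := mul_le_one₀ hip (norm_nonneg _) this
        nlinarith
      nlinarith
    · have h1 : ‖D x‖ ^ 2 = 1 - (2 * c - c ^ 2) * (inner ℝ e x) ^ 2 := by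
        rw [hDx, norm_sub_sq_real, norm_smul, inner_smul_right, real_inner_comm, hx, he,
          Real.norm_eq_abs, mul_one, sq_abs]
        ring
      have h2 : ‖D x‖ ^ 2 ≤ 1 - (2 * c - c ^ 2) * (9 / 10) := by
        rw [h1]; nlinarith [mul_le_mul_of_nonneg_left h (by nlinarith : 0 ≤ 2 * c - c ^ 2)]
      have h3 : ((1 + 3 * c / 4) * ‖D x‖) ^ 2 ≤ 1 := by
        rw [mul_pow]
        refine (mul_le_mul_of_nonneg_left h2 (sq_nonneg _)).trans ?_
        have : (1 + 3 * c / 4) ^ 2 ≤ 1 + 16 / 10 * c := by nlinarith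
        have h4 : 1 - (2 * c - c ^ 2) * (9 / 10) ≤ 1 - 17 / 10 * c := by nlinarith
        have h5 : 0 ≤ 1 - 17 / 10 * c := by linarith
        calc _ ≤ (1 + 3 * c / 4) ^ 2 * (1 - 17 / 10 * c) :=
              mul_le_mul_of_nonneg_left h4 (sq_nonneg _)
          _ ≤ (1 + 16 / 10 * c) * (1 - 17 / 10 * c) := mul_le_mul_of_nonneg_right this h5
          _ ≤ 1 := by nlinarith
      have h4 : (1 + 3 * c / 4) * ‖D x‖ ≤ 1 := by
        rwa [sq_le_one_iff₀ (by positivity)] at h3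
      exact (mul_le_mul_of_nonneg_left (hle (D x)) (by linarith)).trans h4


/-- If `X` is a 2-dimensional real Hilbert space and `Y` a 2-dimensional real normed
space, then there is a norm-one operator `T : X → Y` with `T(B_X) ⊆ B_Y`, two
linearly independent points `y₁, y₂ ∈ T(B_X) ∩ S_Y`, and `y₁' ∈ S_{Y*}` with
`y₁'(y₁) = 1` such that `y₂ ∉ F(y₁') ∪ F(-y₁')`. -/
theorem hilbert_case_two_contact_points
    {X Y : Type*} [NormedAddCommGroup X] [InnerProductSpace ℝ X]
    [NormedAddCommGroup Y] [NormedSpace ℝ Y]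
    (hX : Module.finrank ℝ X = 2) (hY : Module.finrank ℝ Y = 2) :
    ∃ T : X →L[ℝ] Y, ‖T‖ = 1 ∧
      T '' Metric.closedBall 0 1 ⊆ Metric.closedBall 0 1 ∧
      ∃ y₁ y₂ : Y,
        y₁ ∈ T '' Metric.closedBall 0 1 ∩ Metric.sphere 0 1 ∧
        y₂ ∈ T '' Metric.closedBall 0 1 ∩ Metric.sphere 0 1 ∧
        LinearIndependent ℝ ![y₁, y₂] ∧
        ∃ y₁' : Y →L[ℝ] ℝ, ‖y₁'‖ = 1 ∧ y₁' y₁ = 1 ∧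
          y₂ ∉ ({y : Y | ‖y‖ = 1 ∧ y₁' y = 1} ∪ {y : Y | ‖y‖ = 1 ∧ y₁' y = -1}) := by
  haveI : FiniteDimensional ℝ X := FiniteDimensional.of_finrank_pos (by omega)
  haveI : FiniteDimensional ℝ Y := FiniteDimensional.of_finrank_pos (by omega)
  haveI : Nontrivial X := Module.nontrivial_of_finrank_pos (R := ℝ) (by omega)
  let E : Y ≃L[ℝ] X := ContinuousLinearEquiv.ofFinrankEq (hY.trans hX.symm)
  obtain ⟨T, hT, hdet, hmax⟩ := hc_max hX E
  have hle : ∀ x, ‖T x‖ ≤ ‖x‖ := fun x => by simpa [hT] using T.le_opNorm x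
  obtain ⟨e, he, hTe⟩ : ∃ e : X, ‖e‖ = 1 ∧ ‖T e‖ = 1 := by
    obtain ⟨z, hz1, hz⟩ := (isCompact_sphere (0 : X) 1).exists_isMaxOn
      (NormedSpace.sphere_nonempty.2 zero_le_one) (f := fun x => ‖T x‖) (by fun_prop)
    have hz1' : ‖z‖ = 1 := by simpa using hz1
    refine ⟨z, hz1', le_antisymm (hz1' ▸ hle z) ?_⟩
    rw [← hT]
    exact ContinuousLinearMap.opNorm_le_of_unit_norm (norm_nonneg _)
      fun x hx => hz (by simpa using hx)
  obtain ⟨x, hx, hTx, hex⟩ := hc_contact hX E T hT hdet hmax e he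
  obtain ⟨g, hg, hge⟩ := exists_dual_vector ℝ (T e) (by rw [hTe]; exact one_ne_zero)
  have hge' : g (T e) = 1 := by simpa [hTe] using hge
  have hgx : g (T x) = inner ℝ e x := by
    set z := (InnerProductSpace.toDual ℝ X).symm (g.comp T) with hz
    have hzi : ∀ w, inner ℝ z w = g (T w) := fun w => by
      rw [hz, InnerProductSpace.toDual_symm_apply]; rfl
    have hzn : ‖z‖ ≤ 1 := by
      rw [hz, LinearIsometryEquiv.norm_map]
      simpa [hg, hT] using g.opNorm_comp_le T
    have h0 : ‖z - e‖ ^ 2 ≤ 0 := by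
      rw [norm_sub_sq_real, hzi, hge', he]
      nlinarith [norm_nonneg z]
    have h1 : z = e := by
      rw [← sub_eq_zero, ← norm_eq_zero]
      exact pow_eq_zero_iff (two_ne_zero) |>.1 (le_antisymm h0 (sq_nonneg _))
    rw [← hzi, h1]
  refine ⟨T, hT, ?_, T e, T x, ⟨⟨e, by simp [he], rfl⟩, by simpa using hTe⟩,
    ⟨⟨x, by simp [hx], rfl⟩, by simpa using hTx⟩, ?_, g, hg, hge', ?_⟩
  · rintro _ ⟨w, hw, rfl⟩
    simp only [Metric.mem_closedBall, dist_zero_right] at hw ⊢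
    exact (hle w).trans hw
  · rw [LinearIndependent.pair_iff' (by rw [← norm_ne_zero_iff, hTe]; exact one_ne_zero)]
    intro a ha
    have h1 : |a| = 1 := by
      have := congrArg norm ha
      simpa [norm_smul, hTe, hTx] using this
    have h2 : a = inner ℝ e x := by
      rw [← hgx, ← ha, map_smul, hge']; simp
    rw [← h2, ← sq_abs, h1] at hex
    norm_num at hex
  · rintro (⟨-, h⟩ | ⟨-, h⟩) <;> rw [hgx] at h <;> rw [h] at hex <;> norm_num at hex
end

section
/- Let X and Y be 2-dimensional real normed spaces, identify X with ℝ² via a basis e₁, e₂, set γ̃(θ) = (cos θ · e₁ + sin θ · e₂)/‖cos θ · e₁ + sin θ · e₂‖, and let γ(θ) = γ̃(θ + θ₀), θ ∈ [0, π], be a half arc. Let T : X → Y be a bounded linear operator with ‖T‖ ≤ 1 on the endpoints in the following sense: ‖T(γ(0))‖ = 1, and let y* ∈ S_{Y*} satisfy y*(T(γ(0))) = 1. Suppose 0 < s₁ < s₃ < π are such that ‖T(γ(s₁))‖ < 1 and ‖T(γ(s₃))‖ < 1, and ‖T(γ(π))‖ = 1. Then |y*(T(γ(t)))| < 1 for every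 t ∈ [s₁, s₃]. -/
theorem arc_aux {X : Type*} [NormedAddCommGroup X] [NormedSpace ℝ X] (e₁ e₂ : X)
    (f : X →L[ℝ] ℝ) (p q r : ℝ) (hpq : p ≤ q) (hqr : q ≤ r) (hpr : p < r)
    (hr : r < p + Real.pi)
    (hp : ‖Real.cos p • e₁ + Real.sin p • e₂‖ ≤ f (Real.cos p • e₁ + Real.sin p • e₂))
    (hr' : ‖Real.cos r • e₁ + Real.sin r • e₂‖ ≤ f (Real.cos r • e₁ + Real.sin r • e₂)) :
    ‖Real.cos q • e₁ + Real.sin q • e₂‖ ≤ f (Real.cos q • e₁ + Real.sin q • e₂) := by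
  have hS : 0 < Real.sin (r - p) := Real.sin_pos_of_pos_of_lt_pi (by linarith) (by linarith)
  have ha : 0 ≤ Real.sin (r - q) :=
    Real.sin_nonneg_of_nonneg_of_le_pi (by linarith) (by linarith)
  have hb : 0 ≤ Real.sin (q - p) :=
    Real.sin_nonneg_of_nonneg_of_le_pi (by linarith) (by linarith)
  have c1 : Real.sin (r - p) * Real.cos q
      = Real.sin (r - q) * Real.cos p + Real.sin (q - p) * Real.cos r := by
    simp only [Real.sin_sub]; ring
  have c2 : Real.sin (r - p) * Real.sin q
      = Real.sin (r - q) * Real.sin p + Real.sin (q - p) * Real.sin r := by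
    simp only [Real.sin_sub]; ring
  have key : Real.sin (r - p) • (Real.cos q • e₁ + Real.sin q • e₂)
      = Real.sin (r - q) • (Real.cos p • e₁ + Real.sin p • e₂)
        + Real.sin (q - p) • (Real.cos r • e₁ + Real.sin r • e₂) := by
    simp only [smul_add, smul_smul, c1, c2, add_smul]
    abel
  generalize Real.cos p • e₁ + Real.sin p • e₂ = P at *
  generalize Real.cos q • e₁ + Real.sin q • e₂ = Q at *
  generalize Real.cos r • e₁ + Real.sin r • e₂ = R at *
  have hn : Real.sin (r - p) * ‖Q‖ ≤ Real.sin (r - q) * ‖P‖ + Real.sin (q - p) * ‖R‖ := by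
    have h := norm_add_le (Real.sin (r - q) • P) (Real.sin (q - p) • R)
    rw [← key] at h
    simpa [norm_smul, abs_of_nonneg, ha, hb, hS.le] using h
  have hf : Real.sin (r - p) * f Q = Real.sin (r - q) * f P + Real.sin (q - p) * f R := by
    have h := congrArg f key
    simpa only [map_add, map_smul, smul_eq_mul] using h
  have := mul_le_mul_of_nonneg_left hp ha
  have := mul_le_mul_of_nonneg_left hr' hb
  exact le_of_mul_le_mul_left (by linarith) hS

/-- Let `X, Y` be 2-dimensional real normed spaces, `γ` a half arc, and
`T : X → Y` a bounded linear operator with `‖T (γ 0)‖ = ‖T (γ π)‖ = 1`. Let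
`y' ∈ S_{Y*}` satisfy `y'(T (γ 0)) = 1`, and suppose `0 < s₁ < s₃ < π` are such
that `‖T (γ s₁)‖ < 1` and `‖T (γ s₃)‖ < 1`. Then `|y'(T (γ t))| < 1` for every
`t ∈ [s₁, s₃]`. -/
theorem functional_strictly_less_on_middle_arc
    {X Y : Type*} [NormedAddCommGroup X] [NormedSpace ℝ X]
    [NormedAddCommGroup Y] [NormedSpace ℝ Y]
    (hX : Module.finrank ℝ X = 2) (hY : Module.finrank ℝ Y = 2)
    (e₁ e₂ : X) (hbasis : LinearIndependent ℝ ![e₁, e₂])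
    (θ₀ : ℝ) (γ : ℝ → X)
    (hγ : ∀ θ : ℝ, γ θ =
      ‖Real.cos (θ + θ₀) • e₁ + Real.sin (θ + θ₀) • e₂‖⁻¹ •
        (Real.cos (θ + θ₀) • e₁ + Real.sin (θ + θ₀) • e₂))
    (T : X →L[ℝ] Y)
    (h0 : ‖T (γ 0)‖ = 1) (hπ : ‖T (γ Real.pi)‖ = 1)
    (y' : Y →L[ℝ] ℝ) (hy' : ‖y'‖ = 1) (hy'T : y' (T (γ 0)) = 1)
    (s₁ s₃ : ℝ) (hs₁ : 0 < s₁) (hs₁₃ : s₁ < s₃) (hs₃ : s₃ < Real.pi)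
    (h1 : ‖T (γ s₁)‖ < 1) (h3 : ‖T (γ s₃)‖ < 1) :
    ∀ t ∈ Set.Icc s₁ s₃, |y' (T (γ t))| < 1 := by
  have hne : ∀ θ : ℝ, 0 < ‖Real.cos θ • e₁ + Real.sin θ • e₂‖ := by
    intro θ
    rw [norm_pos_iff]
    intro h
    have h2 := LinearIndependent.pair_iff.1 hbasis _ _ h
    have h3 := Real.sin_sq_add_cos_sq θ
    rw [h2.1, h2.2] at h3
    norm_num at h3
  have hfγ : ∀ θ : ℝ, y' (T (γ θ)) = ‖Real.cos (θ + θ₀) • e₁ + Real.sin (θ + θ₀) • e₂‖⁻¹ *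
      (y'.comp T) (Real.cos (θ + θ₀) • e₁ + Real.sin (θ + θ₀) • e₂) := by
    intro θ
    rw [hγ θ, map_smul, map_smul, smul_eq_mul, ContinuousLinearMap.comp_apply]
  have hle : ∀ θ : ℝ, 1 ≤ y' (T (γ θ)) ↔ ‖Real.cos (θ + θ₀) • e₁ + Real.sin (θ + θ₀) • e₂‖ ≤
      (y'.comp T) (Real.cos (θ + θ₀) • e₁ + Real.sin (θ + θ₀) • e₂) := by
    intro θ
    rw [hfγ θ, le_inv_mul_iff₀ (hne _), mul_one]
  have hle' : ∀ θ : ℝ, 1 ≤ -y' (T (γ θ)) ↔ ‖Real.cos (θ + θ₀) • e₁ + Real.sin (θ + θ₀) • e₂‖ ≤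
      (-(y'.comp T)) (Real.cos (θ + θ₀) • e₁ + Real.sin (θ + θ₀) • e₂) := by
    intro θ
    rw [hfγ θ, ← mul_neg, le_inv_mul_iff₀ (hne _), mul_one]
    rfl
  have hb : ∀ θ : ℝ, |y' (T (γ θ))| ≤ ‖T (γ θ)‖ := by
    intro θ
    have h := y'.le_opNorm (T (γ θ))
    rwa [hy', one_mul, Real.norm_eq_abs] at h
  have hγπ : γ Real.pi = -γ 0 := by
    rw [hγ, hγ, add_comm Real.pi θ₀, Real.cos_add_pi, Real.sin_add_pi, zero_add, neg_smul,
      neg_smul, ← neg_add, norm_neg, smul_neg]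
  rintro t ⟨ht1, ht3⟩
  rw [abs_lt]
  constructor
  · by_contra hcon
    have h5 : 1 ≤ -y' (T (γ s₃)) := by
      rw [hle']
      apply arc_aux e₁ e₂ _ (t + θ₀) (s₃ + θ₀) (Real.pi + θ₀) (by linarith) (by linarith)
        (by linarith) (by linarith)
      · rw [← hle']; linarith
      · rw [← hle', hγπ, map_neg, map_neg, hy'T]; norm_num
    have := neg_le_abs (y' (T (γ s₃)))
    linarith [hb s₃]
  · by_contra hcon
    have h5 : 1 ≤ y' (T (γ s₁)) := by
      rw [hle]
      apply arc_aux e₁ e₂ _ (0 + θ₀) (s₁ + θ₀) (t + θ₀) (by linarith) (by linarith)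
        (by linarith) (by linarith)
      · rw [← hle, hy'T]
      · rw [← hle]; linarith
    have := le_abs_self (y' (T (γ s₁)))
    linarith [hb s₁]
end
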